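/- arXiv:2207.02385 — 3 statements merged into one kernel-verified Lean document; each statement's English description precedes it below -/
import Mathlib

section
/- (Logarithmic Sobolev inequality) Let d ≥ 1 and let u : ℝ^d → ℝ be a smooth function with compact support. Then for every ε > 0, ∫_{ℝ^d} u(x)² log|u(x)| dx ≤ ε ∫_{ℝ^d} |∇u(x)|² dx + (d/4)·log(1/ε) · ∫_{ℝ^d} u(x)² dx + (∫_{ℝ^d} u(x)² dx) · log( (∫_{ℝ^d} u(x)² dx)^{1/2} ), where the integrand u(x)² log|u(x)| is interpreted as 0 at points where u(x) = 0, and the last term is interpreted as 0 when u ≡ 0. -/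
open MeasureTheory

/-!
In coordinates let `f = u²`, let `fᵢ` and `Dᵢ` be the integrals of `f` and `(∂ᵢu)²` along the lines
parallel to the `i`-th axis, and let `S = ∫ f`.

*Entropy splits over the axes.* By the grid-lines lemma, a relative of the Loomis-Whitney
inequality, the function `(f * ∏ i, fᵢ / S) ^ (1 / d)` has integral at most `S`. Gibbs' inequality
with this function as comparison density therefore gives
`∫ f log f ≤ ∑ i, ∫ f log (f / fᵢ) + S log S`.

*Each axis is one-dimensional.* Agmon's inequality `‖u‖_∞⁴ ≤ (∫ u²) (∫ u'²)` on each line reads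
`f² ≤ fᵢ Dᵢ`, so `f log (f / fᵢ) ≤ f log (Dᵢ / fᵢ) / 2`. Since
`log y ≤ δ y - 1 - log δ` and the integral of `f Dᵢ / fᵢ` is at most that of `Dᵢ`, hence of
`(∂ᵢu)²`, summing over `i` with `δ = 4 ε` bounds the entropy by the Dirichlet energy.
-/

open Module (finrank)
open scoped ENNReal

section Logarithms

variable {ι : Type*} [Fintype ι]

lemma mul_log_sub_log_le {f m D δ : ℝ} (hf : 0 ≤ f) (hD : 0 ≤ D) (hδ : 0 < δ)
    (hfmD : f ^ 2 ≤ m * D) :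
    f * (Real.log f - Real.log m) ≤ δ / 2 * (f * D / m) - (1 + Real.log δ) / 2 * f := by
  rcases hf.eq_or_lt with rfl | hf
  · simp
  have hmD : 0 < m * D := (by positivity : 0 < f ^ 2).trans_le hfmD
  have hm : 0 < m := pos_of_mul_pos_left hmD hD
  have hD : 0 < D := pos_of_mul_pos_right hmD hm.le
  have log_sq_le : 2 * Real.log f ≤ Real.log m + Real.log D := by
    simpa [Real.log_mul hm.ne' hD.ne'] using Real.log_le_log (by positivity) hfmD
  have tangent : Real.log δ + (Real.log D - Real.log m) ≤ δ * (D / m) - 1 := by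
    rw [← Real.log_div hD.ne' hm.ne', ← Real.log_mul hδ.ne' (by positivity)]
    exact Real.log_le_sub_one_of_pos (by positivity)
  calc f * (Real.log f - Real.log m)
      ≤ f * (δ / 2 * (D / m) - (1 + Real.log δ) / 2) :=
        mul_le_mul_of_nonneg_left (by linarith) hf.le
    _ = δ / 2 * (f * D / m) - (1 + Real.log δ) / 2 * f := by ring

lemma mul_log_le_sum_mul_log_sub_log [Nonempty ι] {f S : ℝ} {m : ι → ℝ} (hf : 0 < f) (hS : 0 < S)
    (hm : ∀ i, 0 < m i) :
    f * Real.log f ≤ ∑ i, f * (Real.log f - Real.log (m i)) + f * Real.log S +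
      Fintype.card ι * ((f * (∏ i, m i) / S) ^ (1 / Fintype.card ι : ℝ) - f) := by
  have hd : (0 : ℝ) < Fintype.card ι := by exact_mod_cast Fintype.card_pos
  have hprod : 0 < ∏ i, m i := Finset.prod_pos fun i _ ↦ hm i
  set q := (f * (∏ i, m i) / S) ^ (1 / Fintype.card ι : ℝ)
  have hq : 0 < q := by positivity
  have log_q : Fintype.card ι * Real.log q =
      Real.log f + ∑ i, Real.log (m i) - Real.log S := by
    rw [Real.log_rpow (by positivity), Real.log_div (by positivity) hS.ne',
      Real.log_mul hf.ne' hprod.ne', Real.log_prod fun i _ ↦ (hm i).ne']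
    field_simp
  have gibbs : f * (Real.log q - Real.log f) ≤ q - f := by
    rw [← Real.log_div hq.ne' hf.ne', ← le_div_iff₀' hf, sub_div, div_self hf.ne']
    exact Real.log_le_sub_one_of_pos (by positivity)
  calc f * Real.log f
      = ∑ i, f * (Real.log f - Real.log (m i)) + f * Real.log S +
          Fintype.card ι * (f * (Real.log q - Real.log f)) := by
        rw [← Finset.mul_sum, Finset.sum_sub_distrib, Finset.sum_const, Finset.card_univ,
          nsmul_eq_mul]
        linear_combination -f * log_q
    _ ≤ _ := by gcongr

end Logarithms

section Lintegral

variable {α : Type*} [MeasurableSpace α] {μ : Measure α}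

lemma sq_lintegral_mul_le {f g : α → ℝ≥0∞} (hf : AEMeasurable f μ) (hg : AEMeasurable g μ) :
    (∫⁻ a, f a * g a ∂μ) ^ 2 ≤ (∫⁻ a, f a ^ 2 ∂μ) * ∫⁻ a, g a ^ 2 ∂μ := by
  have holder := ENNReal.lintegral_mul_le_Lp_mul_Lq μ Real.HolderConjugate.two_two hf hg
  rw [← ENNReal.mul_rpow_of_nonneg _ _ one_half_pos.le, one_div] at holder
  simpa only [ENNReal.rpow_ofNat, Pi.mul_apply] using (ENNReal.le_rpow_inv_iff two_pos).1 holder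

lemma integral_toReal_le_of_lintegral_le {f : α → ℝ≥0∞} (hf : AEMeasurable f μ) {b : ℝ≥0∞}
    (hb : b ≠ ∞) (hfb : ∫⁻ a, f a ∂μ ≤ b) : ∫ a, (f a).toReal ∂μ ≤ b.toReal := by
  rw [integral_toReal hf (ae_lt_top' hf (ne_top_of_le_ne_top hb hfb))]
  exact ENNReal.toReal_mono hb hfb

lemma toReal_lintegral_enorm_sq {f : α → ℝ} (hf : AEStronglyMeasurable f μ) :
    (∫⁻ a, ‖f a‖ₑ ^ 2 ∂μ).toReal = ∫ a, f a ^ 2 ∂μ := by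
  simpa using (integral_norm_eq_lintegral_enorm (hf.pow 2)).symm

lemma lintegral_enorm_sq_ne_top [TopologicalSpace α] [OpensMeasurableSpace α]
    [IsFiniteMeasureOnCompacts μ] {F : Type*} [NormedAddCommGroup F] {f : α → F}
    (hf : Continuous f) (hc : HasCompactSupport f) : ∫⁻ a, ‖f a‖ₑ ^ 2 ∂μ ≠ ∞ := by
  have : MemLp f 2 μ := hf.memLp_of_hasCompactSupport hc
  simpa using (this.integrable_norm_pow two_ne_zero).2.ne

end Lintegral

section Line

variable {F : Type*} [NormedAddCommGroup F]

lemma two_mul_enorm_le_lintegral_enorm_deriv [NormedSpace ℝ F] [CompleteSpace F] {f : ℝ → F}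
    (hf : ContDiff ℝ 1 f) (hc : HasCompactSupport f) (t : ℝ) :
    2 * ‖f t‖ₑ ≤ ∫⁻ s, ‖deriv f s‖ₑ := by
  have left : ‖f t‖ₑ ≤ ∫⁻ s in Set.Iic t, ‖deriv f s‖ₑ := by
    rw [← hc.integral_Iic_deriv_eq hf t]
    exact enorm_integral_le_lintegral_enorm _
  have right : ‖f t‖ₑ ≤ ∫⁻ s in Set.Ioi t, ‖deriv f s‖ₑ := by
    rw [← enorm_neg, ← hc.integral_Ioi_deriv_eq hf t]
    exact enorm_integral_le_lintegral_enorm _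
  calc 2 * ‖f t‖ₑ = ‖f t‖ₑ + ‖f t‖ₑ := two_mul _
    _ ≤ (∫⁻ s in Set.Iic t, ‖deriv f s‖ₑ) + ∫⁻ s in Set.Ioi t, ‖deriv f s‖ₑ :=
        add_le_add left right
    _ = ∫⁻ s, ‖deriv f s‖ₑ := by
        rw [← Set.compl_Iic, lintegral_add_compl _ measurableSet_Iic]

lemma enorm_pow_four_le_lintegral_mul_lintegral_deriv [InnerProductSpace ℝ F] {f : ℝ → F}
    (hf : ContDiff ℝ 1 f) (hc : HasCompactSupport f) (t : ℝ) :
    ‖f t‖ₑ ^ 4 ≤ (∫⁻ s, ‖f s‖ₑ ^ 2) * ∫⁻ s, ‖deriv f s‖ₑ ^ 2 := by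
  have enorm_deriv_le (s : ℝ) : ‖deriv (fun s ↦ ‖f s‖ ^ 2) s‖ₑ ≤ 2 * (‖f s‖ₑ * ‖deriv f s‖ₑ) := by
    rw [(hf.differentiable one_ne_zero s).hasDerivAt.norm_sq.deriv]
    rw [← ofReal_norm, ← ofReal_norm, ← ofReal_norm, ← ENNReal.ofReal_mul (norm_nonneg _),
      norm_mul, ENNReal.ofReal_mul (norm_nonneg _)]
    gcongr
    · simp
    · exact norm_inner_le_norm _ _
  have sq_le : ‖f t‖ₑ ^ 2 ≤ ∫⁻ s, ‖f s‖ₑ * ‖deriv f s‖ₑ := by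
    refine (ENNReal.mul_le_mul_iff_right two_ne_zero ENNReal.ofNat_ne_top).1 ?_
    calc 2 * ‖f t‖ₑ ^ 2 = 2 * ‖‖f t‖ ^ 2‖ₑ := by simp
      _ ≤ ∫⁻ s, ‖deriv (fun s ↦ ‖f s‖ ^ 2) s‖ₑ :=
          two_mul_enorm_le_lintegral_enorm_deriv (hf.norm_sq ℝ)
            (hc.comp_left (g := fun y ↦ ‖y‖ ^ 2) (by simp)) t
      _ ≤ ∫⁻ s, 2 * (‖f s‖ₑ * ‖deriv f s‖ₑ) := lintegral_mono enorm_deriv_le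
      _ = 2 * ∫⁻ s, ‖f s‖ₑ * ‖deriv f s‖ₑ := lintegral_const_mul' _ _ (by simp)
  calc ‖f t‖ₑ ^ 4 = (‖f t‖ₑ ^ 2) ^ 2 := by rw [← pow_mul]
    _ ≤ (∫⁻ s, ‖f s‖ₑ * ‖deriv f s‖ₑ) ^ 2 := by gcongr
    _ ≤ _ := sq_lintegral_mul_le hf.continuous.enorm.aemeasurable
        (hf.continuous_deriv le_rfl).enorm.aemeasurable

end Line

section Product

variable {ι : Type*} [Fintype ι] [DecidableEq ι] {X : ι → Type*} [∀ i, MeasurableSpace (X i)]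
  {μ : ∀ i, Measure (X i)} {f : (∀ i, X i) → ℝ≥0∞}

variable (μ) in
/-- The geometric mean `(f * ∏ i, fᵢ / ∫ f) ^ (1 / #ι)`, where `fᵢ x` is the integral of `f` along
the line through `x` in direction `i`. It has no more mass than `f`, and serves as the comparison
density in Gibbs' inequality. -/
noncomputable def gridLinesMean (f : (∀ i, X i) → ℝ≥0∞) (x : ∀ i, X i) : ℝ≥0∞ :=
  (f x * (∏ i, (∫⋯∫⁻_{i}, f ∂μ) x) / ∫⁻ y, f y ∂Measure.pi μ) ^ (1 / Fintype.card ι : ℝ)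

lemma ae_toReal_mul_log_le_gridLinesMean [Nonempty ι] (hf : Measurable f)
    (hfi : ∫⁻ x, f x ∂Measure.pi μ ≠ ∞)
    (hpos : ∀ i x, f x ≠ 0 → 0 < ((∫⋯∫⁻_{i}, f ∂μ) x).toReal) :
    ∀ᵐ x ∂Measure.pi μ, (f x).toReal * Real.log (f x).toReal ≤
      ∑ i, (f x).toReal *
          (Real.log (f x).toReal - Real.log ((∫⋯∫⁻_{i}, f ∂μ) x).toReal) +
        (f x).toReal * Real.log (∫⁻ x, f x ∂Measure.pi μ).toReal +
        Fintype.card ι * ((gridLinesMean μ f x).toReal - (f x).toReal) := by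
  have mass_ne_zero : ∀ᵐ x ∂Measure.pi μ, f x ≠ 0 → ∫⁻ x, f x ∂Measure.pi μ ≠ 0 := by
    by_cases h0 : ∫⁻ x, f x ∂Measure.pi μ = 0
    · filter_upwards [(lintegral_eq_zero_iff hf).1 h0] with x hx hx' using absurd hx hx'
    · exact .of_forall fun _ _ ↦ h0
  filter_upwards [ae_lt_top hf hfi, mass_ne_zero] with x hfx hSx
  by_cases h0 : f x = 0
  · simp only [h0, ENNReal.toReal_zero, zero_mul, Finset.sum_const_zero, sub_zero, zero_add]
    positivity
  · simpa only [gridLinesMean, ← ENNReal.toReal_rpow, ENNReal.toReal_div, ENNReal.toReal_mul,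
      ENNReal.toReal_prod] using mul_log_le_sum_mul_log_sub_log (ENNReal.toReal_pos h0 hfx.ne)
        (ENNReal.toReal_pos (hSx h0) hfi) fun i ↦ hpos i x h0

variable [∀ i, SigmaFinite (μ i)]

lemma lintegral_mul_lmarginal_div_lmarginal_le (s : Finset ι) {g : (∀ i, X i) → ℝ≥0∞}
    (hf : Measurable f) (hg : Measurable g) :
    ∫⁻ x, f x * ((∫⋯∫⁻_s, g ∂μ) x / (∫⋯∫⁻_s, f ∂μ) x) ∂Measure.pi μ ≤
      ∫⁻ x, g x ∂Measure.pi μ := by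
  refine lintegral_le_of_lmarginal_le s
    (hf.mul ((hg.lmarginal μ).div (hf.lmarginal μ))) hg fun x ↦ ?_
  have lmarginal_updateFinset (h : (∀ i, X i) → ℝ≥0∞) (y : ∀ i : s, X i) :
      (∫⋯∫⁻_s, h ∂μ) (Function.updateFinset x s y) = (∫⋯∫⁻_s, h ∂μ) x :=
    lmarginal_congr μ h fun i hi ↦ by simp [Function.updateFinset, hi]
  calc (∫⋯∫⁻_s, fun x ↦ f x * ((∫⋯∫⁻_s, g ∂μ) x / (∫⋯∫⁻_s, f ∂μ) x) ∂μ) x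
      = (∫⋯∫⁻_s, f ∂μ) x * ((∫⋯∫⁻_s, g ∂μ) x / (∫⋯∫⁻_s, f ∂μ) x) := by
        simp only [lmarginal.eq_1 μ s (fun x ↦ f x * _), lmarginal_updateFinset]
        exact lintegral_mul_const _ (hf.comp measurable_updateFinset)
    _ ≤ (∫⋯∫⁻_s, g ∂μ) x := ENNReal.mul_div_le

lemma measurable_gridLinesMean (hf : Measurable f) : Measurable (gridLinesMean μ f) :=
  ((hf.mul (Finset.measurable_fun_prod _ fun _ _ ↦ hf.lmarginal μ)).div_const _).pow_const _

lemma lintegral_gridLinesMean_le [Nonempty ι] (hf : Measurable f) :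
    ∫⁻ x, gridLinesMean μ f x ∂Measure.pi μ ≤ ∫⁻ x, f x ∂Measure.pi μ := by
  have hd : (0 : ℝ) < Fintype.card ι := by exact_mod_cast Fintype.card_pos
  set p : ℝ := 1 / Fintype.card ι with hp
  have hp0 : 0 ≤ p := by positivity
  have hcard : 1 - (Fintype.card ι - 1 : ℝ) * p = p := by rw [hp]; field_simp; ring
  have gridLines : ∫⁻ x, f x ^ p * ∏ i, (∫⋯∫⁻_{i}, f ∂μ) x ^ p ∂Measure.pi μ ≤
      (∫⁻ x, f x ∂Measure.pi μ) ^ (1 + p) := by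
    simpa only [hcard, lmarginal_singleton] using
      lintegral_mul_prod_lintegral_pow_le μ hp0 (by linarith) hf
  have hmeas : Measurable fun x ↦ f x ^ p * ∏ i, (∫⋯∫⁻_{i}, f ∂μ) x ^ p :=
    (hf.pow_const p).mul
      (Finset.measurable_fun_prod _ fun i _ ↦ (hf.lmarginal μ).pow_const p)
  simp only [gridLinesMean, ← hp, ENNReal.div_rpow_of_nonneg _ _ hp0,
    ENNReal.mul_rpow_of_nonneg _ _ hp0, ← ENNReal.prod_rpow_of_nonneg hp0]
  simp only [div_eq_mul_inv, lintegral_mul_const _ hmeas]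
  refine ENNReal.div_le_of_le_mul (gridLines.trans_eq ?_)
  rw [ENNReal.rpow_add_of_nonneg _ _ zero_le_one hp0, ENNReal.rpow_one]

lemma integral_toReal_mul_log_le (hf : Measurable f) (hfi : ∫⁻ x, f x ∂Measure.pi μ ≠ ∞)
    (hlog : Integrable (fun x ↦ (f x).toReal * Real.log (f x).toReal) (Measure.pi μ))
    (hpos : ∀ i x, f x ≠ 0 → 0 < ((∫⋯∫⁻_{i}, f ∂μ) x).toReal)
    {g : ι → (∀ i, X i) → ℝ} (hg : ∀ i, Integrable (g i) (Measure.pi μ))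
    (hfg : ∀ i x, (f x).toReal *
      (Real.log (f x).toReal - Real.log ((∫⋯∫⁻_{i}, f ∂μ) x).toReal) ≤ g i x) :
    ∫ x, (f x).toReal * Real.log (f x).toReal ∂Measure.pi μ ≤
      ∑ i, ∫ x, g i x ∂Measure.pi μ + (∫⁻ x, f x ∂Measure.pi μ).toReal *
        Real.log (∫⁻ x, f x ∂Measure.pi μ).toReal := by
  rcases isEmpty_or_nonempty ι
  · simp [integral_unique, lintegral_unique, Measure.real]
  have hfint := integrable_toReal_of_lintegral_ne_top hf.aemeasurable hfi
  have hS : ∫ x, (f x).toReal ∂Measure.pi μ = (∫⁻ x, f x ∂Measure.pi μ).toReal :=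
    integral_toReal hf.aemeasurable (ae_lt_top hf hfi)
  set S := (∫⁻ x, f x ∂Measure.pi μ).toReal
  set q := gridLinesMean μ f
  have hq : AEMeasurable q (Measure.pi μ) := (measurable_gridLinesMean hf).aemeasurable
  have hqf : ∫⁻ x, q x ∂Measure.pi μ ≤ ∫⁻ x, f x ∂Measure.pi μ := lintegral_gridLinesMean_le hf
  have hqint := integrable_toReal_of_lintegral_ne_top hq (ne_top_of_le_ne_top hfi hqf)
  have hqS : ∫ x, (q x).toReal ∂Measure.pi μ ≤ S := integral_toReal_le_of_lintegral_le hq hfi hqf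
  have hsum : Integrable (fun x ↦ ∑ i, g i x) (Measure.pi μ) :=
    integrable_finsetSum _ fun i _ ↦ hg i
  have hmass := hfint.mul_const (Real.log S)
  have hgap := (hqint.sub' hfint).const_mul (Fintype.card ι : ℝ)
  calc ∫ x, (f x).toReal * Real.log (f x).toReal ∂Measure.pi μ
      ≤ ∫ x, (∑ i, g i x + (f x).toReal * Real.log S +
          Fintype.card ι * ((q x).toReal - (f x).toReal)) ∂Measure.pi μ := by
        refine integral_mono_ae hlog ((hsum.add hmass).add hgap) ?_
        filter_upwards [ae_toReal_mul_log_le_gridLinesMean hf hfi hpos] with x hx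
        exact hx.trans (by gcongr with i; exact hfg i x)
    _ = ∑ i, ∫ x, g i x ∂Measure.pi μ + S * Real.log S +
          Fintype.card ι * (∫ x, (q x).toReal ∂Measure.pi μ - S) := by
        rw [integral_add (by exact hsum.add hmass) hgap, integral_add hsum hmass,
          integral_finsetSum _ fun i _ ↦ hg i, integral_mul_const, integral_const_mul,
          integral_sub hqint hfint, hS]
    _ ≤ ∑ i, ∫ x, g i x ∂Measure.pi μ + S * Real.log S :=
        add_le_of_nonpos_right (mul_nonpos_of_nonneg_of_nonpos (by positivity) (by linarith))

lemma integral_toReal_mul_log_le_of_sq_le_lmarginal_mul_lmarginal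
    (hf : Measurable f) (hfi : ∫⁻ x, f x ∂Measure.pi μ ≠ ∞)
    (hlog : Integrable (fun x ↦ (f x).toReal * Real.log (f x).toReal) (Measure.pi μ))
    (hfm : ∀ i x, (∫⋯∫⁻_{i}, f ∂μ) x ≠ ∞)
    {g : ι → (∀ i, X i) → ℝ≥0∞} (hg : ∀ i, Measurable (g i))
    (hgi : ∀ i, ∫⁻ x, g i x ∂Measure.pi μ ≠ ∞) (hgm : ∀ i x, (∫⋯∫⁻_{i}, g i ∂μ) x ≠ ∞)
    (hfg : ∀ i x, f x ^ 2 ≤ (∫⋯∫⁻_{i}, f ∂μ) x * (∫⋯∫⁻_{i}, g i ∂μ) x) {δ : ℝ} (hδ : 0 < δ) :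
    ∫ x, (f x).toReal * Real.log (f x).toReal ∂Measure.pi μ ≤
      ∑ i, (δ / 2 * (∫⁻ x, g i x ∂Measure.pi μ).toReal -
        (1 + Real.log δ) / 2 * (∫⁻ x, f x ∂Measure.pi μ).toReal) +
      (∫⁻ x, f x ∂Measure.pi μ).toReal * Real.log (∫⁻ x, f x ∂Measure.pi μ).toReal := by
  set m : ι → (∀ i, X i) → ℝ≥0∞ := fun i ↦ ∫⋯∫⁻_{i}, f ∂μ
  set D : ι → (∀ i, X i) → ℝ≥0∞ := fun i ↦ ∫⋯∫⁻_{i}, g i ∂μ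
  have hpos (i : ι) (x : ∀ i, X i) (hx : f x ≠ 0) : 0 < (m i x).toReal :=
    ENNReal.toReal_pos (left_ne_zero_of_mul (ne_bot_of_le_ne_bot (pow_ne_zero 2 hx) (hfg i x)))
      (hfm i x)
  have hfint := integrable_toReal_of_lintegral_ne_top hf.aemeasurable hfi
  have weighted_meas (i : ι) :
      AEMeasurable (fun x ↦ f x * (D i x / m i x)) (Measure.pi μ) :=
    (hf.mul (((hg i).lmarginal μ).div (hf.lmarginal μ))).aemeasurable
  have weighted_le (i : ι) := lintegral_mul_lmarginal_div_lmarginal_le (μ := μ) {i} hf (hg i)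
  have weighted_int (i : ι) := (integrable_toReal_of_lintegral_ne_top (weighted_meas i)
    (ne_top_of_le_ne_top (hgi i) (weighted_le i))).const_mul (δ / 2)
  have hmass := hfint.const_mul ((1 + Real.log δ) / 2)
  refine (integral_toReal_mul_log_le hf hfi hlog hpos
    (fun i ↦ (weighted_int i).sub hmass) fun i x ↦ ?_).trans ?_
  · have toReal_hfg : (f x).toReal ^ 2 ≤ (m i x).toReal * (D i x).toReal := by
      simpa using ENNReal.toReal_mono (ENNReal.mul_ne_top (hfm i x) (hgm i x)) (hfg i x)
    simpa [mul_div_assoc] using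
      mul_log_sub_log_le ENNReal.toReal_nonneg ENNReal.toReal_nonneg hδ toReal_hfg
  · gcongr with i
    simp only [Pi.sub_apply]
    rw [integral_sub (weighted_int i) hmass, integral_const_mul, integral_const_mul,
      integral_toReal hf.aemeasurable (ae_lt_top hf hfi)]
    gcongr
    exact integral_toReal_le_of_lintegral_le (weighted_meas i) (hgi i) (weighted_le i)

end Product

section Coordinates

variable {ι : Type*} [DecidableEq ι]

section Lines

variable {F : Type*} [NormedAddCommGroup F] {w : (ι → ℝ) → F}

lemma lmarginal_enorm_sq_ne_top (hw : Continuous w) (hc : HasCompactSupport w) (i : ι)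
    (x : ι → ℝ) : (∫⋯∫⁻_{i}, fun y ↦ ‖w y‖ₑ ^ 2) x ≠ ∞ := by
  rw [lmarginal_singleton]
  exact lintegral_enorm_sq_ne_top (hw.comp (continuous_const.update i continuous_id))
    (hc.comp_isClosedEmbedding (isClosedEmbedding_update x i))

lemma enorm_pow_four_le_lmarginal_mul_lmarginal_fderiv [Fintype ι] [InnerProductSpace ℝ F]
    (hw : ContDiff ℝ 1 w) (hc : HasCompactSupport w) (i : ι) (x : ι → ℝ) :
    ‖w x‖ₑ ^ 4 ≤ (∫⋯∫⁻_{i}, fun y ↦ ‖w y‖ₑ ^ 2) x *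
      (∫⋯∫⁻_{i}, fun y ↦ ‖fderiv ℝ w y (Pi.single i 1)‖ₑ ^ 2) x := by
  have deriv_line (t : ℝ) :
      deriv (w ∘ Function.update x i) t = fderiv ℝ w (Function.update x i t) (Pi.single i 1) :=
    ((hw.differentiable one_ne_zero _).hasFDerivAt.comp_hasDerivAt t
      (hasDerivAt_update x i t)).deriv
  simpa only [lmarginal_singleton, Function.comp_apply, deriv_line, Function.update_eq_self] using
    enorm_pow_four_le_lintegral_mul_lintegral_deriv (hw.comp (contDiff_update 1 x i))
      (hc.comp_isClosedEmbedding (isClosedEmbedding_update x i)) (x i)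

end Lines

lemma integral_sq_mul_log_sq_le_sum [Fintype ι] {w : (ι → ℝ) → ℝ} (hw : ContDiff ℝ 1 w)
    (hc : HasCompactSupport w) {δ : ℝ} (hδ : 0 < δ) :
    ∫ x, w x ^ 2 * Real.log (w x ^ 2) ≤
      ∑ i, (δ / 2 * (∫ x, fderiv ℝ w x (Pi.single i 1) ^ 2) -
        (1 + Real.log δ) / 2 * ∫ x, w x ^ 2) +
      (∫ x, w x ^ 2) * Real.log (∫ x, w x ^ 2) := by
  have hcg (i : ι) : Continuous fun x ↦ fderiv ℝ w x (Pi.single i 1) :=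
    (hw.continuous_fderiv one_ne_zero).clm_apply continuous_const
  have hsg (i : ι) : HasCompactSupport fun x ↦ fderiv ℝ w x (Pi.single i 1) :=
    hc.fderiv_apply (𝕜 := ℝ) _
  have hcont : Continuous fun x ↦ w x ^ 2 * Real.log (w x ^ 2) :=
    Real.continuous_mul_log.comp (hw.continuous.pow 2)
  have hlog : Integrable fun x ↦ w x ^ 2 * Real.log (w x ^ 2) :=
    hcont.integrable_of_hasCompactSupport
      (hc.comp_left (g := fun y : ℝ ↦ y ^ 2 * Real.log (y ^ 2)) (by simp))
  have entropy := integral_toReal_mul_log_le_of_sq_le_lmarginal_mul_lmarginal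
    (μ := fun _ : ι ↦ (volume : Measure ℝ)) (f := fun x ↦ ‖w x‖ₑ ^ 2)
    (g := fun i x ↦ ‖fderiv ℝ w x (Pi.single i 1)‖ₑ ^ 2)
    (hw.continuous.enorm.measurable.pow_const 2)
    (lintegral_enorm_sq_ne_top hw.continuous hc) (by simpa [← volume_pi] using hlog)
    (lmarginal_enorm_sq_ne_top hw.continuous hc)
    (fun i ↦ (hcg i).enorm.measurable.pow_const 2)
    (fun i ↦ lintegral_enorm_sq_ne_top (hcg i) (hsg i))
    (fun i ↦ lmarginal_enorm_sq_ne_top (hcg i) (hsg i) i)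
    (fun i x ↦ by
      simpa only [← pow_mul] using enorm_pow_four_le_lmarginal_mul_lmarginal_fderiv hw hc i x) hδ
  simpa [← volume_pi, toReal_lintegral_enorm_sq, hw.continuous.aestronglyMeasurable,
    (hcg _).aestronglyMeasurable] using entropy

end Coordinates

section Euclidean

variable {E : Type*} [NormedAddCommGroup E] [InnerProductSpace ℝ E] [FiniteDimensional ℝ E]
  [MeasurableSpace E] [BorelSpace E] {u : E → ℝ}

lemma integral_sq_mul_log_sq_le (hu : ContDiff ℝ 1 u) (hc : HasCompactSupport u) {δ : ℝ}
    (hδ : 0 < δ) :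
    ∫ x, u x ^ 2 * Real.log (u x ^ 2) ≤
      δ / 2 * (∫ x, ‖fderiv ℝ u x‖ ^ 2) - finrank ℝ E / 2 * (1 + Real.log δ) * (∫ x, u x ^ 2) +
      (∫ x, u x ^ 2) * Real.log (∫ x, u x ^ 2) := by
  let b := stdOrthonormalBasis ℝ E
  let e : (Fin (finrank ℝ E) → ℝ) ≃L[ℝ] E :=
    (EuclideanSpace.equiv _ ℝ).symm.trans b.repr.symm.toContinuousLinearEquiv
  have he : MeasurePreserving e :=
    b.measurePreserving_repr_symm.comp (PiLp.volume_preserving_toLp _)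
  have integral_comp (φ : E → ℝ) : ∫ x, φ (e x) = ∫ y, φ y :=
    he.integral_comp e.toHomeomorph.measurableEmbedding φ
  have partial_eq (x : Fin (finrank ℝ E) → ℝ) (i : Fin (finrank ℝ E)) :
      fderiv ℝ (u ∘ e) x (Pi.single i 1) = fderiv ℝ u (e x) (b i) := by
    rw [e.comp_right_fderiv]
    simp [e]
  have integral_comp_partial (i : Fin (finrank ℝ E)) :=
    integral_comp fun y ↦ fderiv ℝ u y (b i) ^ 2
  have integrable_partial (i : Fin (finrank ℝ E)) :
      Integrable fun y ↦ fderiv ℝ u y (b i) ^ 2 :=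
    (((hu.continuous_fderiv one_ne_zero).clm_apply continuous_const).memLp_of_hasCompactSupport
      (hc.fderiv_apply (𝕜 := ℝ) (b i))).integrable_sq
  have gradient : ∑ i, ∫ x, fderiv ℝ (u ∘ e) x (Pi.single i 1) ^ 2 = ∫ y, ‖fderiv ℝ u y‖ ^ 2 := by
    simp only [partial_eq, integral_comp_partial, b.norm_dual]
    exact (integral_finsetSum _ fun i _ ↦ integrable_partial i).symm
  have coordinates := integral_sq_mul_log_sq_le_sum (hu.comp e.contDiff)
    (hc.comp_homeomorph e.toHomeomorph) hδ
  simp only [Function.comp_apply, integral_comp fun y ↦ u y ^ 2,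
    integral_comp fun y ↦ u y ^ 2 * Real.log (u y ^ 2), Finset.sum_sub_distrib, ← Finset.mul_sum,
    gradient, Finset.sum_const, Finset.card_univ, Fintype.card_fin, nsmul_eq_mul] at coordinates
  linarith

theorem log_sobolev_inequality_general (hu : ContDiff ℝ 1 u) (hc : HasCompactSupport u) {ε : ℝ}
    (hε : 0 < ε) :
    (∫ x, u x ^ 2 * Real.log |u x|) ≤
      ε * (∫ x, ‖fderiv ℝ u x‖ ^ 2)
        + (finrank ℝ E / 4 : ℝ) * Real.log (1 / (4 * Real.exp 1 * ε)) * (∫ x, u x ^ 2)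
        + (∫ x, u x ^ 2) * Real.log √(∫ x, u x ^ 2) := by
  have log_abs (x : E) : u x ^ 2 * Real.log |u x| = (u x ^ 2 * Real.log (u x ^ 2)) / 2 := by
    rw [Real.log_pow, Real.log_abs]
    ring
  have log_const : Real.log (1 / (4 * Real.exp 1 * ε)) = -(1 + Real.log (4 * ε)) := by
    rw [one_div, Real.log_inv, mul_right_comm, Real.log_mul (by positivity) (Real.exp_ne_zero 1),
      Real.log_exp, add_comm]
  have key := integral_sq_mul_log_sq_le hu hc (mul_pos four_pos hε)
  have mass_nonneg : 0 ≤ ∫ x, u x ^ 2 := integral_nonneg fun x ↦ sq_nonneg (u x)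
  simp only [log_abs, integral_div, log_const, Real.log_sqrt mass_nonneg]
  linarith

end Euclidean

/-- Logarithmic Sobolev inequality: for smooth compactly supported `u : ℝ^d → ℝ` and `ε > 0`,
`∫ u² log|u| ≤ ε ∫ |∇u|² + (d/4) log(1/ε) ∫ u² + (∫ u²) log((∫ u²)^{1/2})`. -/
theorem log_sobolev_inequality
    (d : ℕ) (hd : 1 ≤ d)
    (u : EuclideanSpace ℝ (Fin d) → ℝ)
    (hu : ContDiff ℝ (⊤ : ℕ∞) u) (hsupp : HasCompactSupport u)
    (ε : ℝ) (hε : 0 < ε) :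
    (∫ x, u x ^ 2 * Real.log |u x|) ≤
      ε * (∫ x, ‖fderiv ℝ u x‖ ^ 2)
        + (d / 4 : ℝ) * Real.log (1 / ε) * (∫ x, u x ^ 2)
        + (∫ x, u x ^ 2) * Real.log (Real.sqrt (∫ x, u x ^ 2)) := by
  have le_mul : ε ≤ 4 * Real.exp 1 * ε :=
    le_mul_of_one_le_left hε.le (by linarith [Real.add_one_le_exp 1])
  refine (log_sobolev_inequality_general (hu.of_le (by exact_mod_cast le_top)) hsupp hε).trans ?_
  rw [finrank_euclideanSpace_fin]
  gcongr
end

section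
/- Let d ≥ 1, let D ⊆ ℝ^d be a bounded measurable set of Lebesgue measure m(D), and let u : ℝ^d → ℝ be a smooth function with compact support contained in D. Then for every ε > 0, ∫_D u(x)² log₊|u(x)| dx ≤ ε ∫ |∇u(x)|² dx + (d/4)·log(1/ε) · ‖u‖² + ‖u‖² · log‖u‖ + m(D)/(2e), where ‖u‖ denotes the L² norm of u, with the term ‖u‖² log‖u‖ interpreted as 0 when u ≡ 0. -/
open MeasureTheory

/-!
Write `Ent_μ(f) = ∫ f log f dμ - (∫ f dμ) log (∫ f dμ)`. The logarithmic Sobolev inequality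
`Ent(u²) ≤ ε ∫ |∇u|² + (d/2) log(1/ε) ∫ u²` tensorizes because entropy is subadditive over product
measures, which is the nonnegativity of mutual information. In dimension one, integrating
`(u²)' = 2 u u'` gives `u² ≤ ∫ u² / √ε + √ε ∫ u'²` pointwise; as the entropy of a function `f`
bounded by `B` is at most `(∫ f) log (B / ∫ f)`, the concavity of `log` finishes that case. Finally
`u² log₊|u|` exceeds `½ u² log u²` only where `|u| < 1`, and there by at most `-½ min (t log t)`,
which is `1/(2e)`.
-/

section Pointwise

lemma mul_log_sub_mul_log_self_le {a b : ℝ} (ha : 0 ≤ a) (hb : 0 ≤ b) (hab : b = 0 → a = 0) :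
    a * Real.log b - a * Real.log a ≤ b - a := by
  rcases ha.eq_or_lt with rfl | ha
  · simpa using hb
  have hb : 0 < b := hb.lt_of_ne' (mt hab ha.ne')
  calc a * Real.log b - a * Real.log a
      = a * Real.log (b / a) := by rw [Real.log_div hb.ne' ha.ne', mul_sub]
    _ ≤ a * (b / a - 1) := by gcongr; exact Real.log_le_sub_one_of_pos (by positivity)
    _ = b - a := by field_simp

lemma mul_log_mul_div {a x y z : ℝ} (hx : x = 0 → a = 0) (hy : y = 0 → a = 0)
    (hz : z = 0 → a = 0) :
    a * Real.log (x * y / z) = a * Real.log x + a * Real.log y - a * Real.log z := by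
  by_cases ha : a = 0
  · simp [ha]
  · rw [Real.log_div (mul_ne_zero (mt hx ha) (mt hy ha)) (mt hz ha),
      Real.log_mul (mt hx ha) (mt hy ha)]
    ring

lemma neg_inv_exp_one_le_mul_log {x : ℝ} (hx : 0 ≤ x) : -(Real.exp 1)⁻¹ ≤ x * Real.log x := by
  have h := mul_log_sub_mul_log_self_le hx (Real.exp_pos (-1)).le
    (fun h => absurd h (Real.exp_pos _).ne')
  rw [Real.log_exp, Real.exp_neg] at h
  linarith

lemma sq_mul_log_max_one_abs_le (t : ℝ) :
    t ^ 2 * Real.log (max 1 |t|) ≤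
      1 / 2 * (t ^ 2 * Real.log (t ^ 2)) + 1 / (2 * Real.exp 1) := by
  have hmin : -(Real.exp 1)⁻¹ ≤ t ^ 2 * Real.log (t ^ 2) := neg_inv_exp_one_le_mul_log (sq_nonneg t)
  have hhalf : 1 / (2 * Real.exp 1) = (Real.exp 1)⁻¹ / 2 := by field_simp
  rw [hhalf]
  rcases le_total 1 |t| with h | h
  · have hlog : Real.log (t ^ 2) = 2 * Real.log |t| := by rw [Real.log_pow, Real.log_abs]; norm_cast
    have hexp : 0 < (Real.exp 1)⁻¹ := by positivity
    rw [max_eq_right h, hlog]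
    linarith
  · rw [max_eq_left h, Real.log_one]
    linarith

end Pointwise

section Gibbs

variable {α : Type*} [MeasurableSpace α] {μ : Measure α}

lemma integral_mul_log_le_integral_mul_log_self {f g : α → ℝ}
    (hf_nonneg : ∀ x, 0 ≤ f x) (hg_nonneg : ∀ x, 0 ≤ g x)
    (hf : Integrable f μ) (hg : Integrable g μ)
    (hff : Integrable (fun x => f x * Real.log (f x)) μ)
    (hfg : Integrable (fun x => f x * Real.log (g x)) μ)
    (hzero : ∀ᵐ x ∂μ, g x = 0 → f x = 0) (hle : ∫ x, g x ∂μ ≤ ∫ x, f x ∂μ) :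
    ∫ x, f x * Real.log (g x) ∂μ ≤ ∫ x, f x * Real.log (f x) ∂μ := by
  have h : ∫ x, (f x * Real.log (g x) - f x * Real.log (f x)) ∂μ ≤ ∫ x, (g x - f x) ∂μ :=
    integral_mono_ae (hfg.sub hff) (hg.sub hf) <| hzero.mono fun x hx =>
      mul_log_sub_mul_log_self_le (hf_nonneg x) (hg_nonneg x) hx
  rw [integral_sub hfg hff, integral_sub hg hf] at h
  linarith

lemma setIntegral_sq_mul_log_max_one_abs_le {u : α → ℝ} {D : Set α} (hD : μ D ≠ ⊤)
    (hu : Function.support u ⊆ D) (hulog : Integrable (fun x => u x ^ 2 * Real.log (u x ^ 2)) μ) :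
    ∫ x in D, u x ^ 2 * Real.log (max 1 |u x|) ∂μ ≤
      1 / 2 * ∫ x, u x ^ 2 * Real.log (u x ^ 2) ∂μ + (μ D).toReal / (2 * Real.exp 1) := by
  have hconst : IntegrableOn (fun _ : α => 1 / (2 * Real.exp 1)) D μ := integrableOn_const hD
  have hhalf : IntegrableOn (fun x => 1 / 2 * (u x ^ 2 * Real.log (u x ^ 2))) D μ :=
    (hulog.const_mul (1 / 2)).integrableOn
  calc ∫ x in D, u x ^ 2 * Real.log (max 1 |u x|) ∂μ
      ≤ ∫ x in D, (1 / 2 * (u x ^ 2 * Real.log (u x ^ 2)) + 1 / (2 * Real.exp 1)) ∂μ :=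
        integral_mono_of_nonneg
          (.of_forall fun x => mul_nonneg (sq_nonneg _) (Real.log_nonneg (le_max_left _ _)))
          (hhalf.fun_add hconst) (.of_forall fun x => sq_mul_log_max_one_abs_le (u x))
    _ = 1 / 2 * ∫ x in D, u x ^ 2 * Real.log (u x ^ 2) ∂μ + (μ D).toReal / (2 * Real.exp 1) := by
        rw [integral_add hhalf hconst, integral_const_mul, setIntegral_const, Measure.real,
          smul_eq_mul, mul_one_div]
    _ = 1 / 2 * ∫ x, u x ^ 2 * Real.log (u x ^ 2) ∂μ + (μ D).toReal / (2 * Real.exp 1) := by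
        rw [setIntegral_eq_integral_of_forall_compl_eq_zero fun x hx => by
          simp [Function.notMem_support.1 (mt (@hu x) hx)]]

end Gibbs

section Marginals

variable {α β : Type*} [MeasurableSpace α] [MeasurableSpace β] {μ : Measure α} {ν : Measure β}
  [SFinite μ] [SFinite ν] {F : α × β → ℝ}

lemma integrable_mul_comp_marginal_snd (hF_nonneg : ∀ p, 0 ≤ F p) (hF : Integrable F (μ.prod ν))
    {φ : ℝ → ℝ} (hφ : Measurable φ)
    (hint : Integrable (fun y => (∫ x, F (x, y) ∂μ) * φ (∫ x, F (x, y) ∂μ)) ν) :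
    Integrable (fun p => F p * φ (∫ x, F (x, p.2) ∂μ)) (μ.prod ν) := by
  have hmeas : AEStronglyMeasurable (fun y => φ (∫ x, F (x, y) ∂μ)) ν :=
    (hφ.comp_aemeasurable hF.integral_prod_right.aemeasurable).aestronglyMeasurable
  rw [integrable_prod_iff' (hF.aestronglyMeasurable.fun_mul hmeas.comp_snd)]
  refine ⟨hF.prod_left_ae.mono fun y hy => hy.mul_const (φ (∫ x, F (x, y) ∂μ)),
    hint.norm.congr (.of_forall fun y => ?_)⟩
  simp only [norm_mul, Real.norm_of_nonneg (hF_nonneg _), integral_mul_const,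
    Real.norm_of_nonneg (integral_nonneg fun x => hF_nonneg (x, y))]

lemma integral_mul_comp_marginal_snd (hF_nonneg : ∀ p, 0 ≤ F p) (hF : Integrable F (μ.prod ν))
    {φ : ℝ → ℝ} (hφ : Measurable φ)
    (hint : Integrable (fun y => (∫ x, F (x, y) ∂μ) * φ (∫ x, F (x, y) ∂μ)) ν) :
    ∫ p, F p * φ (∫ x, F (x, p.2) ∂μ) ∂(μ.prod ν) =
      ∫ y, (∫ x, F (x, y) ∂μ) * φ (∫ x, F (x, y) ∂μ) ∂ν := by
  rw [integral_prod_symm _ (integrable_mul_comp_marginal_snd hF_nonneg hF hφ hint)]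
  simp only [integral_mul_const]

lemma ae_eq_zero_of_marginal_snd_eq_zero (hF_nonneg : ∀ p, 0 ≤ F p)
    (hF : Integrable F (μ.prod ν)) :
    ∀ᵐ p ∂(μ.prod ν), ∫ x, F (x, p.2) ∂μ = 0 → F p = 0 := by
  let φ : ℝ → ℝ := ({0} : Set ℝ).indicator 1
  have hφ : Measurable φ := measurable_one.indicator (measurableSet_singleton 0)
  have hφ_nonneg : ∀ t, 0 ≤ φ t := Set.indicator_nonneg fun _ _ => zero_le_one
  have hmul : ∀ t, t * φ t = 0 := fun t => by
    by_cases ht : t = 0 <;> simp [φ, ht]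
  have hint : Integrable (fun y => (∫ x, F (x, y) ∂μ) * φ (∫ x, F (x, y) ∂μ)) ν := by
    simp only [hmul]
    exact integrable_zero β ℝ ν
  have hzero := integral_mul_comp_marginal_snd hF_nonneg hF hφ hint
  simp only [hmul, integral_zero] at hzero
  rw [integral_eq_zero_iff_of_nonneg (fun p => mul_nonneg (hF_nonneg p) (hφ_nonneg _))
    (integrable_mul_comp_marginal_snd hF_nonneg hF hφ hint)] at hzero
  filter_upwards [hzero] with p hp hmarg
  simpa [φ, hmarg] using hp

lemma integrable_mul_comp_marginal_fst (hF_nonneg : ∀ p, 0 ≤ F p) (hF : Integrable F (μ.prod ν))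
    {φ : ℝ → ℝ} (hφ : Measurable φ)
    (hint : Integrable (fun x => (∫ y, F (x, y) ∂ν) * φ (∫ y, F (x, y) ∂ν)) μ) :
    Integrable (fun p => F p * φ (∫ y, F (p.1, y) ∂ν)) (μ.prod ν) :=
  (integrable_mul_comp_marginal_snd (fun p => hF_nonneg p.swap) hF.swap hφ hint).swap

lemma integral_mul_comp_marginal_fst (hF_nonneg : ∀ p, 0 ≤ F p) (hF : Integrable F (μ.prod ν))
    {φ : ℝ → ℝ} (hφ : Measurable φ)
    (hint : Integrable (fun x => (∫ y, F (x, y) ∂ν) * φ (∫ y, F (x, y) ∂ν)) μ) :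
    ∫ p, F p * φ (∫ y, F (p.1, y) ∂ν) ∂(μ.prod ν) =
      ∫ x, (∫ y, F (x, y) ∂ν) * φ (∫ y, F (x, y) ∂ν) ∂μ := by
  rw [integral_prod _ (integrable_mul_comp_marginal_fst hF_nonneg hF hφ hint)]
  simp only [integral_mul_const]

lemma ae_eq_zero_of_marginal_fst_eq_zero (hF_nonneg : ∀ p, 0 ≤ F p)
    (hF : Integrable F (μ.prod ν)) :
    ∀ᵐ p ∂(μ.prod ν), ∫ y, F (p.1, y) ∂ν = 0 → F p = 0 :=
  Measure.measurePreserving_swap.quasiMeasurePreserving.ae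
    (ae_eq_zero_of_marginal_snd_eq_zero (fun p => hF_nonneg p.swap) hF.swap)

/-- Gibbs' inequality against the normalized product of the marginals, i.e. nonnegativity of
mutual information. -/
lemma integral_marginal_mul_log_add_le (hF_nonneg : ∀ p, 0 ≤ F p) (hF : Integrable F (μ.prod ν))
    (hFlog : Integrable (fun p => F p * Real.log (F p)) (μ.prod ν))
    (hfst : Integrable (fun x => (∫ y, F (x, y) ∂ν) * Real.log (∫ y, F (x, y) ∂ν)) μ)
    (hsnd : Integrable (fun y => (∫ x, F (x, y) ∂μ) * Real.log (∫ x, F (x, y) ∂μ)) ν) :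
    ∫ x, (∫ y, F (x, y) ∂ν) * Real.log (∫ y, F (x, y) ∂ν) ∂μ
      + ∫ y, (∫ x, F (x, y) ∂μ) * Real.log (∫ x, F (x, y) ∂μ) ∂ν ≤
    ∫ p, F p * Real.log (F p) ∂(μ.prod ν)
      + (∫ p, F p ∂(μ.prod ν)) * Real.log (∫ p, F p ∂(μ.prod ν)) := by
  set M := ∫ p, F p ∂(μ.prod ν) with hM
  let f : α → ℝ := fun x => ∫ y, F (x, y) ∂ν
  let g : β → ℝ := fun y => ∫ x, F (x, y) ∂μ
  have hf_nonneg : ∀ x, 0 ≤ f x := fun x => integral_nonneg fun y => hF_nonneg (x, y)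
  have hg_nonneg : ∀ y, 0 ≤ g y := fun y => integral_nonneg fun x => hF_nonneg (x, y)
  have hM_zero : ∀ᵐ p ∂(μ.prod ν), M = 0 → F p = 0 := by
    by_cases h : M = 0
    · exact ((integral_eq_zero_iff_of_nonneg hF_nonneg hF).1 h).mono fun p hp _ => hp
    · exact .of_forall fun p h' => absurd h' h
  have hf_zero := ae_eq_zero_of_marginal_fst_eq_zero hF_nonneg hF
  have hg_zero := ae_eq_zero_of_marginal_snd_eq_zero hF_nonneg hF
  have hlogf : Integrable (fun p => F p * Real.log (f p.1)) (μ.prod ν) :=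
    integrable_mul_comp_marginal_fst hF_nonneg hF Real.measurable_log hfst
  have hlogg : Integrable (fun p => F p * Real.log (g p.2)) (μ.prod ν) :=
    integrable_mul_comp_marginal_snd hF_nonneg hF Real.measurable_log hsnd
  have hsplit : (fun p => F p * Real.log (f p.1 * g p.2 / M)) =ᵐ[μ.prod ν]
      fun p => F p * Real.log (f p.1) + F p * Real.log (g p.2) - F p * Real.log M := by
    filter_upwards [hM_zero, hf_zero, hg_zero] with p hMp hfp hgp
    exact mul_log_mul_div hfp hgp hMp
  have hmass : ∫ p, f p.1 * g p.2 / M ∂(μ.prod ν) = M := by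
    rw [integral_div, integral_prod_mul f g, ← integral_prod _ hF, ← integral_prod_symm _ hF,
      ← hM, mul_self_div_self]
  have hgibbs := integral_mul_log_le_integral_mul_log_self hF_nonneg
    (fun p => div_nonneg (mul_nonneg (hf_nonneg p.1) (hg_nonneg p.2)) (integral_nonneg hF_nonneg))
    hF ((hF.integral_prod_left.mul_prod hF.integral_prod_right).div_const M) hFlog
    (((hlogf.fun_add hlogg).sub (hF.mul_const _)).congr hsplit.symm)
    (by
      filter_upwards [hM_zero, hf_zero, hg_zero] with p hMp hfp hgp hp
      rcases div_eq_zero_iff.1 hp with hp | hp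
      · exact (mul_eq_zero.1 hp).elim hfp hgp
      · exact hMp hp)
    hmass.le
  rw [integral_congr_ae hsplit, integral_sub (hlogf.fun_add hlogg) (hF.mul_const _),
    integral_add hlogf hlogg, integral_mul_const, ← hM,
    integral_mul_comp_marginal_fst hF_nonneg hF Real.measurable_log hfst,
    integral_mul_comp_marginal_snd hF_nonneg hF Real.measurable_log hsnd] at hgibbs
  linarith

end Marginals

/-- The entropy functional `Ent_μ(f) = ∫ f log f dμ - (∫ f dμ) log (∫ f dμ)` of a nonnegative
function; `μ` is not required to be a probability measure. It is meaningful only when `f` and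
`f log f` are integrable. -/
noncomputable def entropy {α : Type*} [MeasurableSpace α] (μ : Measure α) (f : α → ℝ) : ℝ :=
  ∫ x, f x * Real.log (f x) ∂μ - (∫ x, f x ∂μ) * Real.log (∫ x, f x ∂μ)

section Entropy

variable {α β : Type*} [MeasurableSpace α] [MeasurableSpace β] {μ : Measure α} {ν : Measure β}

lemma entropy_dirac [MeasurableSingletonClass α] (a : α) (f : α → ℝ) :
    entropy (Measure.dirac a) f = 0 := by
  simp [entropy]

lemma entropy_comp_of_measurePreserving {e : α → β} (he : MeasurePreserving e μ ν)
    (he' : MeasurableEmbedding e) (f : β → ℝ) : entropy μ (fun x => f (e x)) = entropy ν f := by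
  simp only [entropy, he.integral_comp he' f, he.integral_comp he' fun y => f y * Real.log (f y)]

lemma entropy_le_of_le {f : α → ℝ} {B : ℝ} (hf_nonneg : ∀ x, 0 ≤ f x) (hfB : ∀ x, f x ≤ B)
    (hf : Integrable f μ) (hflog : Integrable (fun x => f x * Real.log (f x)) μ) :
    entropy μ f ≤ (∫ x, f x ∂μ) * Real.log B - (∫ x, f x ∂μ) * Real.log (∫ x, f x ∂μ) := by
  rw [entropy, ← integral_mul_const (Real.log B)]
  refine sub_le_sub_right (integral_mono hflog (hf.mul_const _) fun x => ?_) _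
  rcases (hf_nonneg x).eq_or_lt with hx | hx
  · simp [← hx]
  · exact mul_le_mul_of_nonneg_left (Real.log_le_log hx (hfB x)) hx.le

variable [SFinite μ] [SFinite ν] {F : α × β → ℝ}

lemma integrable_entropy_slice (hFlog : Integrable (fun p => F p * Real.log (F p)) (μ.prod ν))
    (hsnd : Integrable (fun y => (∫ x, F (x, y) ∂μ) * Real.log (∫ x, F (x, y) ∂μ)) ν) :
    Integrable (fun y => entropy μ fun x => F (x, y)) ν :=
  hFlog.integral_prod_right.sub hsnd

theorem entropy_prod_le (hF_nonneg : ∀ p, 0 ≤ F p) (hF : Integrable F (μ.prod ν))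
    (hFlog : Integrable (fun p => F p * Real.log (F p)) (μ.prod ν))
    (hfst : Integrable (fun x => (∫ y, F (x, y) ∂ν) * Real.log (∫ y, F (x, y) ∂ν)) μ)
    (hsnd : Integrable (fun y => (∫ x, F (x, y) ∂μ) * Real.log (∫ x, F (x, y) ∂μ)) ν) :
    entropy (μ.prod ν) F ≤
      ∫ y, entropy μ (fun x => F (x, y)) ∂ν + ∫ x, entropy ν (fun y => F (x, y)) ∂μ := by
  have hmutual := integral_marginal_mul_log_add_le hF_nonneg hF hFlog hfst hsnd
  simp only [entropy]
  rw [integral_sub hFlog.integral_prod_right hsnd, integral_sub hFlog.integral_prod_left hfst,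
    ← integral_prod_symm _ hFlog, ← integral_prod _ hFlog]
  linarith

end Entropy

section CompactSupport

variable {X Y Z : Type*} [TopologicalSpace X] [TopologicalSpace Y]

lemma hasCompactSupport_slice_snd [Zero Z] [R1Space X] {F : X × Y → Z} (hs : HasCompactSupport F)
    (y : Y) : HasCompactSupport fun x => F (x, y) :=
  .intro (hs.isCompact.image continuous_fst) fun x hx =>
    image_eq_zero_of_notMem_tsupport fun h => hx ⟨(x, y), h, rfl⟩

variable [MeasurableSpace X] [OpensMeasurableSpace X] {μ : Measure X} [IsFiniteMeasureOnCompacts μ]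

lemma integrable_comp_of_hasCompactSupport [TopologicalSpace Z] [Zero Z] {f : X → Z}
    (hf : Continuous f) (hs : HasCompactSupport f) {φ : Z → ℝ} (hφ : Continuous φ)
    (hφ_zero : φ 0 = 0) :
    Integrable (fun x => φ (f x)) μ :=
  (hφ.comp hf).integrable_of_hasCompactSupport (hs.comp_left hφ_zero)

lemma integrable_sq {u : X → ℝ} (hu : Continuous u) (hs : HasCompactSupport u) :
    Integrable (fun x => u x ^ 2) μ :=
  integrable_comp_of_hasCompactSupport hu hs (continuous_pow 2) (by simp)

lemma integrable_sq_mul_log_sq {u : X → ℝ} (hu : Continuous u) (hs : HasCompactSupport u) :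
    Integrable (fun x => u x ^ 2 * Real.log (u x ^ 2)) μ :=
  integrable_comp_of_hasCompactSupport hu hs (φ := fun t => t ^ 2 * Real.log (t ^ 2))
    (by fun_prop) (by simp)

lemma integrable_comp_fderiv_comp {E E₁ : Type*} [NormedAddCommGroup E] [NormedSpace ℝ E]
    [NormedAddCommGroup E₁] [NormedSpace ℝ E₁] [MeasurableSpace E] [OpensMeasurableSpace E]
    {μ : Measure E} [IsFiniteMeasureOnCompacts μ] {u : E → ℝ} (hu : ContDiff ℝ 1 u)
    (hs : HasCompactSupport u) {Γ : (E₁ →L[ℝ] ℝ) → ℝ} (hΓ : Continuous Γ) (hΓ_zero : Γ 0 = 0)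
    (A : E₁ →L[ℝ] E) : Integrable (fun x => Γ ((fderiv ℝ u x).comp A)) μ :=
  integrable_comp_of_hasCompactSupport (hu.continuous_fderiv one_ne_zero) (hs.fderiv (𝕜 := ℝ))
    (φ := fun L => Γ (L.comp A)) (by fun_prop) (by simpa using hΓ_zero)

lemma integrable_marginal_mul_log [R1Space Y] [MeasurableSpace Y] [OpensMeasurableSpace Y]
    {ν : Measure Y} [IsFiniteMeasureOnCompacts ν] {F : X × Y → ℝ} (hF : Continuous F)
    (hs : HasCompactSupport F) :
    Integrable (fun y => (∫ x, F (x, y) ∂μ) * Real.log (∫ x, F (x, y) ∂μ)) ν := by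
  have hcont : Continuous fun y => ∫ x, F (x, y) ∂μ := by
    rw [← continuousOn_univ]
    exact continuousOn_integral_of_compact_support (f := fun y x => F (x, y))
      (hs.isCompact.image continuous_fst) (hF.comp continuous_swap).continuousOn
      fun y x _ hx => image_eq_zero_of_notMem_tsupport fun h => hx ⟨(x, y), h, rfl⟩
  have hsupp : HasCompactSupport fun y => ∫ x, F (x, y) ∂μ :=
    .intro (hs.isCompact.image continuous_snd) fun y hy =>
      integral_eq_zero_of_ae <| .of_forall fun x =>
        image_eq_zero_of_notMem_tsupport fun h => hy ⟨(x, y), h, rfl⟩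
  exact integrable_comp_of_hasCompactSupport hcont hsupp Real.continuous_mul_log (by simp)

end CompactSupport

section LogSobolev

variable {E E₁ E₂ : Type*}
  [NormedAddCommGroup E] [NormedSpace ℝ E] [MeasurableSpace E]
  [NormedAddCommGroup E₁] [NormedSpace ℝ E₁] [MeasurableSpace E₁]
  [NormedAddCommGroup E₂] [NormedSpace ℝ E₂] [MeasurableSpace E₂]

/-- `μ` satisfies the (defective) logarithmic Sobolev inequality with energy density `Γ` and
defect `c`. The energy density is a function of the differential of `u`, so that a Riemannian
energy is `Γ L = ε * ‖L‖ ^ 2`, and the energies of the factors of a product space simply add. -/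
def LogSobolevInequality (μ : Measure E) (Γ : (E →L[ℝ] ℝ) → ℝ) (c : ℝ) : Prop :=
  ∀ u : E → ℝ, ContDiff ℝ 1 u → HasCompactSupport u →
    entropy μ (fun x => u x ^ 2) ≤ ∫ x, Γ (fderiv ℝ u x) ∂μ + c * ∫ x, u x ^ 2 ∂μ

namespace LogSobolevInequality

lemma map [BorelSpace E₁] [BorelSpace E₂] {μ : Measure E₁} {ν : Measure E₂}
    {Γ : (E₁ →L[ℝ] ℝ) → ℝ} {c : ℝ} (h : LogSobolevInequality μ Γ c) (e : E₁ ≃L[ℝ] E₂)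
    (he : MeasurePreserving e μ ν) :
    LogSobolevInequality ν (fun L => Γ (L.comp (e : E₁ →L[ℝ] E₂))) c := by
  intro u hu hs
  have he' : MeasurableEmbedding e := e.toHomeomorph.measurableEmbedding
  have hcomp := h (u ∘ e) (hu.comp e.contDiff) (hs.comp_homeomorph e.toHomeomorph)
  simp only [e.comp_right_fderiv] at hcomp
  rwa [← entropy_comp_of_measurePreserving he he', ← he.integral_comp he', ← he.integral_comp he']

section Prod

variable [BorelSpace E₁] [BorelSpace E₂] [SecondCountableTopologyEither E₁ E₂]
  {μ : Measure E₁} {ν : Measure E₂} [SFinite μ] [SFinite ν] [IsFiniteMeasureOnCompacts μ]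
  [IsFiniteMeasureOnCompacts ν] {Γ₁ : (E₁ →L[ℝ] ℝ) → ℝ} {Γ₂ : (E₂ →L[ℝ] ℝ) → ℝ} {c₁ c₂ : ℝ}
  {u : E₁ × E₂ → ℝ}

lemma integral_entropy_slice_snd_le (h : LogSobolevInequality μ Γ₁ c₁) (hΓ : Continuous Γ₁)
    (hΓ_zero : Γ₁ 0 = 0) (hu : ContDiff ℝ 1 u) (hs : HasCompactSupport u) :
    ∫ y, entropy μ (fun x => u (x, y) ^ 2) ∂ν ≤
      ∫ p, Γ₁ ((fderiv ℝ u p).comp (.inl ℝ E₁ E₂)) ∂(μ.prod ν)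
        + c₁ * ∫ p, u p ^ 2 ∂(μ.prod ν) := by
  have hsq : Integrable (fun p => u p ^ 2) (μ.prod ν) := integrable_sq hu.continuous hs
  have henergy : Integrable (fun p => Γ₁ ((fderiv ℝ u p).comp (.inl ℝ E₁ E₂))) (μ.prod ν) :=
    integrable_comp_fderiv_comp hu hs hΓ hΓ_zero _
  have hentropy : Integrable (fun y => entropy μ fun x => u (x, y) ^ 2) ν :=
    integrable_entropy_slice (integrable_sq_mul_log_sq hu.continuous hs)
      (integrable_marginal_mul_log (F := fun p => u p ^ 2) (hu.continuous.pow 2)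
        (hs.comp_left (g := fun t => t ^ 2) (by simp)))
  have hslice (y : E₂) : entropy μ (fun x => u (x, y) ^ 2) ≤
      ∫ x, Γ₁ ((fderiv ℝ u (x, y)).comp (.inl ℝ E₁ E₂)) ∂μ + c₁ * ∫ x, u (x, y) ^ 2 ∂μ := by
    have hfderiv (x : E₁) :
        fderiv ℝ (fun x => u (x, y)) x = (fderiv ℝ u (x, y)).comp (.inl ℝ E₁ E₂) :=
      ((hu.differentiable one_ne_zero _).hasFDerivAt.comp x (hasFDerivAt_prodMk_left x y)).fderiv
    simpa only [hfderiv] using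
      h (fun x => u (x, y)) (hu.comp (by fun_prop)) (hasCompactSupport_slice_snd hs y)
  calc ∫ y, entropy μ (fun x => u (x, y) ^ 2) ∂ν
      ≤ ∫ y, (∫ x, Γ₁ ((fderiv ℝ u (x, y)).comp (.inl ℝ E₁ E₂)) ∂μ
          + c₁ * ∫ x, u (x, y) ^ 2 ∂μ) ∂ν :=
        integral_mono hentropy
          (henergy.integral_prod_right.fun_add (hsq.integral_prod_right.const_mul c₁)) hslice
    _ = _ := by
        rw [integral_add henergy.integral_prod_right (hsq.integral_prod_right.const_mul c₁),
          integral_const_mul, ← integral_prod_symm _ henergy, ← integral_prod_symm _ hsq]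

lemma integral_entropy_slice_fst_le (h : LogSobolevInequality ν Γ₂ c₂) (hΓ : Continuous Γ₂)
    (hΓ_zero : Γ₂ 0 = 0) (hu : ContDiff ℝ 1 u) (hs : HasCompactSupport u) :
    ∫ x, entropy ν (fun y => u (x, y) ^ 2) ∂μ ≤
      ∫ p, Γ₂ ((fderiv ℝ u p).comp (.inr ℝ E₁ E₂)) ∂(μ.prod ν)
        + c₂ * ∫ p, u p ^ 2 ∂(μ.prod ν) := by
  have : SecondCountableTopologyEither E₂ E₁ :=
    ⟨(SecondCountableTopologyEither.out (α := E₁) (β := E₂)).symm⟩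
  let e : (E₂ × E₁) ≃L[ℝ] E₁ × E₂ := .prodComm ℝ E₂ E₁
  have hinr : (e : E₂ × E₁ →L[ℝ] E₁ × E₂).comp (.inl ℝ E₂ E₁) = .inr ℝ E₁ E₂ := by ext <;> rfl
  have hswap := integral_entropy_slice_snd_le (ν := μ) h hΓ hΓ_zero (hu.comp e.contDiff)
    (hs.comp_homeomorph e.toHomeomorph)
  simp only [e.comp_right_fderiv, ContinuousLinearMap.comp_assoc, hinr] at hswap
  rw [← integral_prod_swap, ← integral_prod_swap (μ := μ) (fun p => u p ^ 2)]
  exact hswap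

theorem prod (h₁ : LogSobolevInequality μ Γ₁ c₁) (h₂ : LogSobolevInequality ν Γ₂ c₂)
    (hΓ₁ : Continuous Γ₁) (hΓ₁_zero : Γ₁ 0 = 0) (hΓ₂ : Continuous Γ₂) (hΓ₂_zero : Γ₂ 0 = 0) :
    LogSobolevInequality (μ.prod ν)
      (fun L => Γ₁ (L.comp (.inl ℝ E₁ E₂)) + Γ₂ (L.comp (.inr ℝ E₁ E₂))) (c₁ + c₂) := by
  intro u hu hs
  have hsq_cont : Continuous fun p => u p ^ 2 := hu.continuous.pow 2
  have hsq_supp : HasCompactSupport fun p => u p ^ 2 :=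
    hs.comp_left (g := fun t => t ^ 2) (by simp)
  calc entropy (μ.prod ν) (fun p => u p ^ 2)
      ≤ ∫ y, entropy μ (fun x => u (x, y) ^ 2) ∂ν + ∫ x, entropy ν (fun y => u (x, y) ^ 2) ∂μ :=
        entropy_prod_le (fun p => sq_nonneg (u p)) (integrable_sq hu.continuous hs)
          (integrable_sq_mul_log_sq hu.continuous hs)
          (integrable_marginal_mul_log (F := fun p : E₂ × E₁ => u p.swap ^ 2)
            (hsq_cont.comp continuous_swap) (hsq_supp.comp_homeomorph (.prodComm E₂ E₁)))
          (integrable_marginal_mul_log hsq_cont hsq_supp)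
    _ ≤ _ := add_le_add (h₁.integral_entropy_slice_snd_le hΓ₁ hΓ₁_zero hu hs)
          (h₂.integral_entropy_slice_fst_le hΓ₂ hΓ₂_zero hu hs)
    _ = _ := by
        rw [integral_add (integrable_comp_fderiv_comp hu hs hΓ₁ hΓ₁_zero _)
          (integrable_comp_fderiv_comp hu hs hΓ₂ hΓ₂_zero _)]
        ring

end Prod

end LogSobolevInequality

end LogSobolev

section Real

lemma sq_le_integral_sq_add_integral_deriv_sq {v : ℝ → ℝ} (hv : ContDiff ℝ 1 v)
    (hs : HasCompactSupport v) {r : ℝ} (hr : 0 < r) (x : ℝ) :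
    v x ^ 2 ≤ (∫ t, v t ^ 2) / r + r * ∫ t, deriv v t ^ 2 := by
  have hsq : Integrable fun t => v t ^ 2 / r := (integrable_sq hv.continuous hs).div_const r
  have hderiv_sq : Integrable fun t => r * deriv v t ^ 2 :=
    (integrable_sq (hv.continuous_deriv le_rfl) hs.deriv).const_mul r
  have hsq_supp : HasCompactSupport fun t => v t ^ 2 :=
    hs.comp_left (g := fun t => t ^ 2) (by simp)
  have hderiv_int : Integrable (deriv fun t => v t ^ 2) :=
    ((hv.pow 2).continuous_deriv le_rfl).integrable_of_hasCompactSupport hsq_supp.deriv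
  have hyoung (t : ℝ) : deriv (fun t => v t ^ 2) t ≤ v t ^ 2 / r + r * deriv v t ^ 2 := by
    have hderiv : deriv (fun t => v t ^ 2) t = 2 * v t * deriv v t := by
      rw [deriv_fun_pow (hv.differentiable one_ne_zero t)]; norm_num
    have hsquare : v t ^ 2 / r + r * deriv v t ^ 2 - 2 * v t * deriv v t =
        (v t - r * deriv v t) ^ 2 / r := by
      field_simp
      ring
    rw [hderiv, ← sub_nonneg, hsquare]
    positivity
  calc v x ^ 2
      = ∫ t in Set.Iic x, deriv (fun t => v t ^ 2) t :=
        (HasCompactSupport.integral_Iic_deriv_eq (hv.pow 2) hsq_supp x).symm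
    _ ≤ ∫ t in Set.Iic x, (v t ^ 2 / r + r * deriv v t ^ 2) :=
        integral_mono hderiv_int.integrableOn (hsq.fun_add hderiv_sq).integrableOn hyoung
    _ ≤ ∫ t, (v t ^ 2 / r + r * deriv v t ^ 2) :=
        setIntegral_le_integral (hsq.fun_add hderiv_sq) (.of_forall fun t => by positivity)
    _ = (∫ t, v t ^ 2) / r + r * ∫ t, deriv v t ^ 2 := by
        rw [integral_add hsq hderiv_sq, integral_div, integral_const_mul]

lemma mul_log_div_sqrt_add_sub_le {M A ε : ℝ} (hM : 0 ≤ M) (hA : 0 ≤ A) (hε : 0 < ε) :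
    M * Real.log (M / √ε + √ε * A) - M * Real.log M ≤
      ε * A + 1 / 2 * Real.log (1 / ε) * M := by
  rcases hM.eq_or_lt with rfl | hM
  · simpa using mul_nonneg hε.le hA
  have hr : 0 < √ε := Real.sqrt_pos.2 hε
  have htangent : M / √ε * Real.log (M / √ε + √ε * A) - M / √ε * Real.log (M / √ε) ≤ √ε * A := by
    simpa using mul_log_sub_mul_log_self_le (a := M / √ε) (b := M / √ε + √ε * A)
      (by positivity) (by positivity) fun h => absurd h (by positivity)
  have hscaled := mul_le_mul_of_nonneg_left htangent hr.le
  rw [mul_sub, ← mul_assoc, ← mul_assoc, ← mul_assoc, mul_div_cancel₀ _ hr.ne',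
    Real.mul_self_sqrt hε.le, Real.log_div hM.ne' hr.ne', Real.log_sqrt hε.le] at hscaled
  rw [one_div ε, Real.log_inv]
  linarith

theorem logSobolevInequality_real {ε : ℝ} (hε : 0 < ε) :
    LogSobolevInequality (volume : Measure ℝ) (fun L => ε * L 1 ^ 2)
      (1 / 2 * Real.log (1 / ε)) := by
  intro v hv hs
  simp only [fderiv_apply_one_eq_deriv, integral_const_mul]
  exact (entropy_le_of_le (fun x => sq_nonneg (v x))
    (sq_le_integral_sq_add_integral_deriv_sq hv hs (Real.sqrt_pos.2 hε))
    (integrable_sq hv.continuous hs) (integrable_sq_mul_log_sq hv.continuous hs)).trans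
    (mul_log_div_sqrt_add_sub_le (integral_nonneg fun x => sq_nonneg (v x))
      (integral_nonneg fun x => sq_nonneg (deriv v x)) hε)

end Real

section Euclidean

lemma measurePreserving_finConsEquivL (d : ℕ) :
    MeasurePreserving (Fin.consEquivL ℝ fun _ : Fin (d + 1) => ℝ) := by
  convert! (volume_preserving_piFinSuccAbove (fun _ : Fin (d + 1) => ℝ) 0).symm using 1
  ext p i
  rcases p with ⟨x, y⟩
  rw [Fin.consEquivL_apply]
  simp [MeasurableEquiv.piFinSuccAbove, MeasurableEquiv.symm, Fin.insertNthEquiv]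

lemma finConsEquivL_one_zero (d : ℕ) :
    Fin.consEquivL ℝ (fun _ : Fin (d + 1) => ℝ) (1, 0) = Pi.single 0 1 := by
  ext j
  refine Fin.cases ?_ (fun j => ?_) j <;> simp

lemma finConsEquivL_zero_single {d : ℕ} (i : Fin d) :
    Fin.consEquivL ℝ (fun _ : Fin (d + 1) => ℝ) (0, Pi.single i 1) = Pi.single i.succ 1 := by
  ext j
  refine Fin.cases ?_ (fun j => ?_) j <;> simp [Pi.single_apply]

theorem logSobolevInequality_pi {ε : ℝ} (hε : 0 < ε) (d : ℕ) :
    LogSobolevInequality (volume : Measure (Fin d → ℝ))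
      (fun L => ε * ∑ i, L (Pi.single i 1) ^ 2) (d / 2 * Real.log (1 / ε)) := by
  induction d with
  | zero =>
    intro u _ _
    rw [Measure.volume_pi_eq_dirac (x := 0)]
    simp [entropy_dirac]
  | succ d ih =>
    have hprod := ((logSobolevInequality_real hε).prod ih (by fun_prop) (by simp) (by fun_prop)
      (by simp)).map _ (measurePreserving_finConsEquivL d)
    have hconst : (1 / 2 * Real.log (1 / ε) + d / 2 * Real.log (1 / ε) : ℝ) =
        (d + 1 : ℕ) / 2 * Real.log (1 / ε) := by
      push_cast
      ring
    simp only [ContinuousLinearMap.comp_apply, ContinuousLinearEquiv.coe_coe,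
      ContinuousLinearMap.inl_apply, ContinuousLinearMap.inr_apply, finConsEquivL_one_zero,
      finConsEquivL_zero_single, ← mul_add, hconst] at hprod
    simpa only [Fin.sum_univ_succ] using hprod

theorem logSobolevInequality_volume {E : Type*} [NormedAddCommGroup E] [InnerProductSpace ℝ E]
    [FiniteDimensional ℝ E] [MeasurableSpace E] [BorelSpace E] {ε : ℝ} (hε : 0 < ε) :
    LogSobolevInequality (volume : Measure E) (fun L => ε * ‖L‖ ^ 2)
      (Module.finrank ℝ E / 2 * Real.log (1 / ε)) := by
  let b := stdOrthonormalBasis ℝ E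
  let e := (PiLp.continuousLinearEquiv 2 ℝ fun _ => ℝ).symm.trans
    b.repr.symm.toContinuousLinearEquiv
  have he : MeasurePreserving e :=
    b.measurePreserving_repr_symm.comp (PiLp.volume_preserving_toLp _)
  have hnorm (L : E →L[ℝ] ℝ) :
      ‖L‖ ^ 2 = ∑ i, L.comp (e : (Fin (Module.finrank ℝ E) → ℝ) →L[ℝ] E) (Pi.single i 1) ^ 2 := by
    have he_single (i) : e (Pi.single i 1) = b i := b.repr_symm_single i
    simp [b.norm_dual, he_single]
  simp only [hnorm]
  exact (logSobolevInequality_pi hε _).map e he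

theorem log_sobolev_inequality_plus_general {E : Type*} [NormedAddCommGroup E]
    [InnerProductSpace ℝ E] [FiniteDimensional ℝ E] [MeasurableSpace E] [BorelSpace E]
    {D : Set E} (hD : volume D ≠ ⊤) {u : E → ℝ} (hu : ContDiff ℝ 1 u) (hs : HasCompactSupport u)
    (huD : Function.support u ⊆ D) {ε : ℝ} (hε : 0 < ε) :
    ∫ x in D, u x ^ 2 * Real.log (max 1 |u x|) ≤
      ε / 2 * (∫ x, ‖fderiv ℝ u x‖ ^ 2)
        + (Module.finrank ℝ E / 4 : ℝ) * Real.log (1 / ε) * (∫ x, u x ^ 2)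
        + (∫ x, u x ^ 2) * Real.log (Real.sqrt (∫ x, u x ^ 2))
        + (volume D).toReal / (2 * Real.exp 1) := by
  have hentropy := logSobolevInequality_volume hε u hu hs
  rw [entropy, integral_const_mul] at hentropy
  have hplus := setIntegral_sq_mul_log_max_one_abs_le hD huD
    (integrable_sq_mul_log_sq hu.continuous hs)
  rw [Real.log_sqrt (integral_nonneg fun x => sq_nonneg (u x))]
  linarith

end Euclidean

/-- Modified logarithmic Sobolev inequality with `log₊`: for a smooth function `u`
compactly supported in a bounded measurable set `D` and `ε > 0`,
`∫_D u² log₊|u| ≤ ε ∫ |∇u|² + (d/4) log(1/ε) ‖u‖² + ‖u‖² log‖u‖ + m(D)/(2e)`. -/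
theorem log_sobolev_inequality_plus
    (d : ℕ) (hd : 1 ≤ d)
    (D : Set (EuclideanSpace ℝ (Fin d)))
    (hDmeas : MeasurableSet D) (hDbdd : Bornology.IsBounded D)
    (u : EuclideanSpace ℝ (Fin d) → ℝ)
    (hu : ContDiff ℝ (⊤ : ℕ∞) u) (hsupp : HasCompactSupport u)
    (hsuppD : tsupport u ⊆ D)
    (ε : ℝ) (hε : 0 < ε) :
    (∫ x in D, u x ^ 2 * Real.log (max 1 |u x|)) ≤
      ε * (∫ x, ‖fderiv ℝ u x‖ ^ 2)
        + (d / 4 : ℝ) * Real.log (1 / ε) * (∫ x, u x ^ 2)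
        + (∫ x, u x ^ 2) * Real.log (Real.sqrt (∫ x, u x ^ 2))
        + (volume D).toReal / (2 * Real.exp 1) := by
  have hgeneral := log_sobolev_inequality_plus_general hDbdd.measure_lt_top.ne
    (hu.of_le (by exact_mod_cast le_top)) hsupp ((subset_tsupport u).trans hsuppD) hε
  rw [finrank_euclideanSpace_fin] at hgeneral
  have henergy : 0 ≤ ε * ∫ x, ‖fderiv ℝ u x‖ ^ 2 := by positivity
  linarith
end

section
/- Let d ≥ 1 and let u, v : ℝ^d → ℝ be smooth functions with compact support. Then for every ε > 0 and every α ∈ (0,1): ∫ (u(x) log|u(x)| − v(x) log|v(x)|)·(u(x) − v(x)) dx ≤ ε ∫ |∇(u−v)(x)|² dx + (1 + (d/4)·log(1/ε)) · ‖u − v‖² + ‖u − v‖² · log‖u − v‖ + (1/(2(1−α)e)) · (‖u‖^{2(1−α)} + ‖v‖^{2(1−α)}) · ‖u − v‖^{2α}, where ‖·‖ denotes the L² norm, the integrand terms w log|w| are interpreted as 0 where w = 0, and ‖u−v‖² log‖u−v‖ is interpreted as 0 when u = v. -/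
open MeasureTheory

/-!
Write `w = u - v`. If `|v| ≤ |u|`, then `(u log|u| - v log|v|) w` equals
`w² log|u| + v w (log|u| - log|v|)`. The second term is at most `w²` because `log r ≤ r - 1`, and
`w² log|u| - w² log|w|` is controlled by `log t ≤ t ^ s / (s e)` with `s = 1 - α` and `t = u² / w²`.
Hölder's inequality integrates the resulting remainder.

The term `∫ w² log|w|` is bounded by a logarithmic Sobolev inequality. Let `R_i` and `Q_i` be the
integrals of `w²` and `(∂_i w)²` over the line in direction `i`. The one-dimensional inequality
`‖g‖_∞² ≤ ‖g‖₂ ‖g'‖₂` on each line gives `w⁴ ≤ R_i Q_i`, hence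
`log w² - log R_i ≤ (a/2) Q_i / R_i - (1 + log a)/2` for every `a > 0`. After multiplication by `w²`
the quotient integrates along the lines to at most `(a/2) ∫ (∂_i w)²`. What remains of `w² log w²`,
namely `w² (∑ log R_i - (d - 1) log w²)`, is bounded by linearizing the logarithm in the grid-lines
(Loomis–Whitney) inequality `∫ w ^ (2 (1 - (d - 1) p)) ∏ R_i ^ p ≤ (∫ w²) ^ (1 + p)`. Taking
`p = 1 / (d + 1)` makes the exponents admissible in every dimension.
-/

open Function Module

section Scalar

lemma log_le_rpow_div_mul_exp_one {t s : ℝ} (ht : 0 ≤ t) (hs : 0 < s) :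
    Real.log t ≤ t ^ s / (s * Real.exp 1) := by
  rcases ht.eq_or_lt with rfl | ht
  · simp [Real.zero_rpow hs.ne']
  rw [le_div_iff₀ (by positivity), Real.rpow_def_of_pos ht]
  calc Real.log t * (s * Real.exp 1) = Real.exp 1 * (Real.log t * s) := by ring
    _ ≤ Real.exp (Real.log t * s) := Real.exp_one_mul_le_exp

lemma mul_log_le_mul_log_add_rpow_mul_rpow {x y α : ℝ} (hx : 0 < x) (hy : 0 < y) (hα : α < 1) :
    y * Real.log x ≤
      y * Real.log y + x ^ (1 - α) * y ^ α / ((1 - α) * Real.exp 1) := by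
  have h := log_le_rpow_div_mul_exp_one (div_nonneg hx.le hy.le) (sub_pos.2 hα)
  rw [Real.log_div hx.ne' hy.ne', Real.div_rpow hx.le hy.le] at h
  have hy' : y ^ α = y / y ^ (1 - α) := by
    rw [Real.rpow_sub hy, Real.rpow_one, div_div_cancel₀ hy.ne']
  calc y * Real.log x = y * Real.log y + y * (Real.log x - Real.log y) := by ring
    _ ≤ y * Real.log y + y * (x ^ (1 - α) / y ^ (1 - α) / ((1 - α) * Real.exp 1)) := by gcongr
    _ = y * Real.log y + x ^ (1 - α) * y ^ α / ((1 - α) * Real.exp 1) := by rw [hy']; ring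

lemma mul_sub_mul_log_abs_sub_log_abs_le {a b : ℝ} (hab : |b| ≤ |a|) :
    b * (a - b) * (Real.log |a| - Real.log |b|) ≤ (a - b) ^ 2 := by
  rcases eq_or_ne b 0 with rfl | hb
  · simpa using sq_nonneg a
  have hb' : 0 < |b| := abs_pos.2 hb
  have ha' : 0 < |a| := hb'.trans_le hab
  have hlog : 0 ≤ Real.log |a| - Real.log |b| := sub_nonneg.2 (Real.log_le_log hb' hab)
  have hmul : |b| * (Real.log |a| - Real.log |b|) ≤ |a - b| :=
    calc |b| * (Real.log |a| - Real.log |b|) = |b| * Real.log (|a| / |b|) := by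
          rw [Real.log_div ha'.ne' hb'.ne']
      _ ≤ |b| * (|a| / |b| - 1) := by
          gcongr; exact Real.log_le_sub_one_of_pos (div_pos ha' hb')
      _ = |a| - |b| := by field_simp
      _ ≤ |a - b| := abs_sub_abs_le_abs_sub a b
  calc b * (a - b) * (Real.log |a| - Real.log |b|)
      ≤ |b * (a - b)| * (Real.log |a| - Real.log |b|) := by gcongr; exact le_abs_self _
    _ = |a - b| * (|b| * (Real.log |a| - Real.log |b|)) := by rw [abs_mul]; ring
    _ ≤ |a - b| * |a - b| := by gcongr
    _ = (a - b) ^ 2 := by rw [abs_mul_abs_self, sq]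

lemma mul_log_abs_sub_mul_log_abs_mul_sub_le (a b : ℝ) {α : ℝ} (hα : α < 1) :
    (a * Real.log |a| - b * Real.log |b|) * (a - b) ≤
      (a - b) ^ 2 * Real.log |a - b| + (a - b) ^ 2 +
        1 / (2 * (1 - α) * Real.exp 1) *
          ((a ^ 2) ^ (1 - α) * ((a - b) ^ 2) ^ α + (b ^ 2) ^ (1 - α) * ((a - b) ^ 2) ^ α) := by
  wlog hab : |b| ≤ |a| generalizing a b
  · have h := this b a (le_of_not_ge hab)
    rw [abs_sub_comm b a, sub_sq_comm b a] at h
    linarith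
  have hα' : 0 < 1 - α := sub_pos.2 hα
  rcases eq_or_ne a b with rfl | hne
  · rw [sub_self, sub_self, zero_mul, abs_zero, Real.log_zero, mul_zero]
    positivity
  have ha : a ≠ 0 := by
    rintro rfl
    exact hne (abs_nonpos_iff.1 (by simpa using hab)).symm
  have hpow : (a - b) ^ 2 * Real.log |a| ≤ (a - b) ^ 2 * Real.log |a - b| +
      1 / (2 * (1 - α) * Real.exp 1) * ((a ^ 2) ^ (1 - α) * ((a - b) ^ 2) ^ α) := by
    have h := mul_log_le_mul_log_add_rpow_mul_rpow (sq_pos_of_ne_zero ha)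
      (sq_pos_of_ne_zero (sub_ne_zero.2 hne)) hα
    simp only [Real.log_abs, Real.log_pow] at h ⊢
    calc (a - b) ^ 2 * Real.log a = (a - b) ^ 2 * ((2 : ℕ) * Real.log a) / 2 := by
          push_cast; ring
      _ ≤ _ := div_le_div_of_nonneg_right h zero_le_two
      _ = _ := by push_cast; field_simp
  have hrest : 0 ≤ 1 / (2 * (1 - α) * Real.exp 1) *
      ((b ^ 2) ^ (1 - α) * ((a - b) ^ 2) ^ α) := by positivity
  linear_combination hpow + hrest + mul_sub_mul_log_abs_sub_log_abs_le hab

lemma log_sub_log_le_of_sq_le_mul {x r q a : ℝ} (hx : 0 < x) (hr : 0 < r) (hxrq : x ^ 2 ≤ r * q)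
    (ha : 0 < a) :
    Real.log x - Real.log r ≤ a / 2 * (q / r) - (1 + Real.log a) / 2 := by
  have hratio : (x / r) ^ 2 ≤ q / r := by
    rw [div_pow, div_le_div_iff₀ (by positivity) hr]
    nlinarith
  have hq : 0 < q / r := lt_of_lt_of_le (by positivity) hratio
  have hsq : 2 * (Real.log x - Real.log r) ≤ Real.log (q / r) := by
    have h := Real.log_le_log (by positivity) hratio
    rwa [Real.log_pow, Real.log_div hx.ne' hr.ne', Nat.cast_two] at h
  have htangent : Real.log (a * (q / r)) ≤ a * (q / r) - 1 :=
    Real.log_le_sub_one_of_pos (by positivity)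
  rw [Real.log_mul ha.ne' hq.ne'] at htangent
  linarith

lemma sum_log_sub_mul_log_le {ι : Type*} [Fintype ι] {x n p : ℝ} {r : ι → ℝ}
    (hx : 0 < x) (hn : 0 < n) (hr : ∀ i, 0 < r i) :
    p * (∑ i, Real.log (r i) - (Fintype.card ι - 1) * Real.log x - Real.log n) * x ≤
      x ^ (1 - (Fintype.card ι - 1) * p) * (∏ i, r i ^ p) / n ^ p - x := by
  set m : ℝ := (Fintype.card ι - 1) * p with hm
  have hprod : 0 < ∏ i, r i ^ p := Finset.prod_pos fun i _ => Real.rpow_pos_of_pos (hr i) p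
  have hlog : Real.log (x ^ (-m) * (∏ i, r i ^ p) / n ^ p) =
      p * (∑ i, Real.log (r i) - (Fintype.card ι - 1) * Real.log x - Real.log n) := by
    rw [Real.log_div (by positivity) (by positivity), Real.log_mul (by positivity) hprod.ne',
      Real.log_prod fun i _ => (Real.rpow_pos_of_pos (hr i) p).ne', Real.log_rpow hx,
      Real.log_rpow hn]
    simp only [Real.log_rpow (hr _), ← Finset.mul_sum, hm]
    ring
  calc p * (∑ i, Real.log (r i) - (Fintype.card ι - 1) * Real.log x - Real.log n) * x
      ≤ (x ^ (-m) * (∏ i, r i ^ p) / n ^ p - 1) * x := by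
        rw [← hlog]
        gcongr
        exact Real.log_le_sub_one_of_pos (by positivity)
    _ = x ^ (1 - m) * (∏ i, r i ^ p) / n ^ p - x := by
        rw [sub_eq_add_neg 1 m, Real.rpow_add hx, Real.rpow_one]
        ring

lemma mul_log_le_sum_div_add_rpow_mul_prod {ι : Type*} [Fintype ι] {x n a p : ℝ} {r q : ι → ℝ}
    (hx : 0 < x) (hn : 0 < n) (hr : ∀ i, 0 < r i) (hxrq : ∀ i, x ^ 2 ≤ r i * q i) (ha : 0 < a)
    (hp : 0 < p) :
    x * Real.log x ≤
      x * (Real.log n - Fintype.card ι / 2 * (1 + Real.log a) - 1 / p)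
        + a / 2 * ∑ i, x * (q i / r i)
        + x ^ (1 - (Fintype.card ι - 1) * p) * (∏ i, r i ^ p) / (p * n ^ p) := by
  have hlines : ∑ i, (Real.log x - Real.log (r i)) ≤
      ∑ i, (a / 2 * (q i / r i) - (1 + Real.log a) / 2) :=
    Finset.sum_le_sum fun i _ => log_sub_log_le_of_sq_le_mul hx (hr i) (hxrq i) ha
  simp only [Finset.sum_sub_distrib, Finset.sum_const, Finset.card_univ, nsmul_eq_mul,
    ← Finset.mul_sum] at hlines
  have hgrid : x * (∑ i, Real.log (r i) - (Fintype.card ι - 1) * Real.log x - Real.log n) ≤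
      x ^ (1 - (Fintype.card ι - 1) * p) * (∏ i, r i ^ p) / (p * n ^ p) - x * (1 / p) := by
    calc x * (∑ i, Real.log (r i) - (Fintype.card ι - 1) * Real.log x - Real.log n)
        = p * (∑ i, Real.log (r i) - (Fintype.card ι - 1) * Real.log x - Real.log n) * x / p := by
          field_simp
      _ ≤ (x ^ (1 - (Fintype.card ι - 1) * p) * (∏ i, r i ^ p) / n ^ p - x) / p :=
          div_le_div_of_nonneg_right (sum_log_sub_mul_log_le hx hn hr) hp.le
      _ = x ^ (1 - (Fintype.card ι - 1) * p) * (∏ i, r i ^ p) / (p * n ^ p) - x * (1 / p) := by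
          rw [sub_div, div_div, mul_comm p, mul_one_div]
  rw [← Finset.mul_sum]
  linear_combination x * hlines + hgrid

end Scalar

section Integral

variable {X : Type*} [MeasurableSpace X] {μ : Measure X} {f g : X → ℝ}

lemma integrable_and_integral_le_of_lintegral_ofReal_le (hf : AEMeasurable f μ)
    (hf0 : ∀ x, 0 ≤ f x) {c : ℝ} (hc : 0 ≤ c)
    (h : ∫⁻ x, ENNReal.ofReal (f x) ∂μ ≤ ENNReal.ofReal c) :
    Integrable f μ ∧ ∫ x, f x ∂μ ≤ c := by
  refine ⟨⟨hf.aestronglyMeasurable, ?_⟩, ?_⟩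
  · rw [hasFiniteIntegral_iff_ofReal (ae_of_all _ hf0)]
    exact h.trans_lt ENNReal.ofReal_lt_top
  · rw [integral_eq_lintegral_of_nonneg_ae (ae_of_all _ hf0) hf.aestronglyMeasurable]
    exact ENNReal.toReal_le_of_le_ofReal hc h

lemma ofReal_integral_le_lintegral_ofReal (hf0 : ∀ x, 0 ≤ f x) :
    ENNReal.ofReal (∫ x, f x ∂μ) ≤ ∫⁻ x, ENNReal.ofReal (f x) ∂μ := by
  calc ENNReal.ofReal (∫ x, f x ∂μ) ≤ ‖∫ x, f x ∂μ‖ₑ := Real.ofReal_le_enorm _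
    _ ≤ ∫⁻ x, ‖f x‖ₑ ∂μ := enorm_integral_le_lintegral_enorm f
    _ = ∫⁻ x, ENNReal.ofReal (f x) ∂μ := by simp only [Real.enorm_of_nonneg (hf0 _)]

lemma integrable_and_integral_rpow_mul_rpow_le {α : ℝ} (hα0 : 0 ≤ α) (hα1 : α ≤ 1)
    (hf : Integrable f μ) (hg : Integrable g μ) (hf0 : ∀ x, 0 ≤ f x) (hg0 : ∀ x, 0 ≤ g x) :
    Integrable (fun x => f x ^ (1 - α) * g x ^ α) μ ∧
      ∫ x, f x ^ (1 - α) * g x ^ α ∂μ ≤ (∫ x, f x ∂μ) ^ (1 - α) * (∫ x, g x ∂μ) ^ α := by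
  have hα1' : 0 ≤ 1 - α := sub_nonneg.2 hα1
  have hfm : AEMeasurable f μ := hf.aemeasurable
  have hgm : AEMeasurable g μ := hg.aemeasurable
  have hF : 0 ≤ ∫ x, f x ∂μ := integral_nonneg hf0
  have hG : 0 ≤ ∫ x, g x ∂μ := integral_nonneg hg0
  refine integrable_and_integral_le_of_lintegral_ofReal_le
    (by fun_prop) (fun x => mul_nonneg (Real.rpow_nonneg (hf0 x) _) (Real.rpow_nonneg (hg0 x) _))
    (by positivity) ?_
  have hpoint (x : X) : ENNReal.ofReal (f x ^ (1 - α) * g x ^ α) =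
      ENNReal.ofReal (f x) ^ (1 - α) * ENNReal.ofReal (g x) ^ α := by
    rw [ENNReal.ofReal_mul (Real.rpow_nonneg (hf0 x) _),
      ENNReal.ofReal_rpow_of_nonneg (hf0 x) hα1', ENNReal.ofReal_rpow_of_nonneg (hg0 x) hα0]
  rw [lintegral_congr hpoint, ENNReal.ofReal_mul (Real.rpow_nonneg hF _),
    ← ENNReal.ofReal_rpow_of_nonneg hF hα1', ← ENNReal.ofReal_rpow_of_nonneg hG hα0,
    ofReal_integral_eq_lintegral_ofReal hf (ae_of_all _ hf0),
    ofReal_integral_eq_lintegral_ofReal hg (ae_of_all _ hg0)]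
  exact ENNReal.lintegral_mul_norm_pow_le (by fun_prop) (by fun_prop) hα1' hα0 (by ring)

lemma sq_integral_abs_mul_le_integral_sq_mul_integral_sq (hf : MemLp f 2 μ)
    (hg : MemLp g 2 μ) :
    (∫ x, |f x * g x| ∂μ) ^ 2 ≤ (∫ x, f x ^ 2 ∂μ) * ∫ x, g x ^ 2 ∂μ := by
  have hf0 : 0 ≤ ∫ x, f x ^ 2 ∂μ := integral_nonneg fun x => sq_nonneg (f x)
  have hg0 : 0 ≤ ∫ x, g x ^ 2 ∂μ := integral_nonneg fun x => sq_nonneg (g x)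
  have h := (integrable_and_integral_rpow_mul_rpow_le (α := 1 / 2) (by norm_num) (by norm_num)
    hf.integrable_sq hg.integrable_sq (fun x => sq_nonneg (f x)) (fun x => sq_nonneg (g x))).2
  simp only [sub_half, ← Real.sqrt_eq_rpow, Real.sqrt_sq_eq_abs, ← abs_mul] at h
  calc (∫ x, |f x * g x| ∂μ) ^ 2 ≤ (√(∫ x, f x ^ 2 ∂μ) * √(∫ x, g x ^ 2 ∂μ)) ^ 2 :=
        pow_le_pow_left₀ (integral_nonneg fun x => abs_nonneg _) h 2
    _ = (∫ x, f x ^ 2 ∂μ) * ∫ x, g x ^ 2 ∂μ := by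
        rw [mul_pow, Real.sq_sqrt hf0, Real.sq_sqrt hg0]

lemma integral_mul_log_abs_sub_mul_log_abs_mul_sub_le {α : ℝ} (hα0 : 0 ≤ α) (hα1 : α < 1)
    (hf : MemLp f 2 μ) (hg : MemLp g 2 μ)
    (hfg : Integrable (fun x => (f x * Real.log |f x| - g x * Real.log |g x|) * (f x - g x)) μ)
    (hlog : Integrable (fun x => (f x - g x) ^ 2 * Real.log |f x - g x|) μ) :
    ∫ x, (f x * Real.log |f x| - g x * Real.log |g x|) * (f x - g x) ∂μ ≤
      (∫ x, (f x - g x) ^ 2 * Real.log |f x - g x| ∂μ) + (∫ x, (f x - g x) ^ 2 ∂μ) +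
        1 / (2 * (1 - α) * Real.exp 1) *
          (((∫ x, f x ^ 2 ∂μ) ^ (1 - α) + (∫ x, g x ^ 2 ∂μ) ^ (1 - α)) *
            (∫ x, (f x - g x) ^ 2 ∂μ) ^ α) := by
  have hsq : Integrable (fun x => (f x - g x) ^ 2) μ := (hf.sub hg).integrable_sq
  have hholder {h : X → ℝ} (hh : MemLp h 2 μ) :=
    integrable_and_integral_rpow_mul_rpow_le hα0 hα1.le hh.integrable_sq hsq
      (fun x => sq_nonneg (h x)) (fun x => sq_nonneg (f x - g x))
  obtain ⟨hfi, hf_le⟩ := hholder hf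
  obtain ⟨hgi, hg_le⟩ := hholder hg
  have hC : 0 ≤ 1 / (2 * (1 - α) * Real.exp 1) := by
    have := sub_pos.2 hα1
    positivity
  have hmono := integral_mono hfg ((hlog.add hsq).add ((hfi.add hgi).const_mul _))
    fun x => mul_log_abs_sub_mul_log_abs_mul_sub_le (f x) (g x) hα1
  rw [integral_add' (hlog.add hsq) ((hfi.add hgi).const_mul _), integral_add' hlog hsq,
    integral_const_mul, integral_add' hfi hgi] at hmono
  rw [add_mul]
  exact hmono.trans
    (add_le_add_right (mul_le_mul_of_nonneg_left (add_le_add hf_le hg_le) hC) _)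

lemma integrable_comp_of_hasCompactSupport_s2 [TopologicalSpace X] [OpensMeasurableSpace X]
    [IsFiniteMeasureOnCompacts μ] {E F : Type*} [NormedAddCommGroup E] [NormedAddCommGroup F]
    {φ : E → F} {h : X → E} (hφ : Continuous φ) (hφ0 : φ 0 = 0) (hh : Continuous h)
    (hhc : HasCompactSupport h) : Integrable (fun x => φ (h x)) μ :=
  (hφ.comp hh).integrable_of_hasCompactSupport (hhc.comp_left hφ0)

end Integral

section Line

lemma two_mul_norm_le_integral_norm_deriv {F : Type*} [NormedAddCommGroup F] [NormedSpace ℝ F]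
    [CompleteSpace F] {g : ℝ → F} (hg : ContDiff ℝ 1 g) (hgc : HasCompactSupport g) (x : ℝ) :
    2 * ‖g x‖ ≤ ∫ t, ‖deriv g t‖ := by
  have hint : Integrable (fun t => ‖deriv g t‖) :=
    ((hg.continuous_deriv le_rfl).integrable_of_hasCompactSupport hgc.deriv).norm
  calc 2 * ‖g x‖ = ‖∫ t in Set.Iic x, deriv g t‖ + ‖∫ t in Set.Ioi x, deriv g t‖ := by
        rw [hgc.integral_Iic_deriv_eq hg, hgc.integral_Ioi_deriv_eq hg, norm_neg, two_mul]
    _ ≤ (∫ t in Set.Iic x, ‖deriv g t‖) + ∫ t in Set.Ioi x, ‖deriv g t‖ :=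
        add_le_add (norm_integral_le_integral_norm _) (norm_integral_le_integral_norm _)
    _ = ∫ t, ‖deriv g t‖ :=
        intervalIntegral.integral_Iic_add_Ioi hint.integrableOn hint.integrableOn

lemma sq_sq_le_integral_sq_mul_integral_deriv_sq {g : ℝ → ℝ} (hg : ContDiff ℝ 1 g)
    (hgc : HasCompactSupport g) (x : ℝ) :
    (g x ^ 2) ^ 2 ≤ (∫ t, g t ^ 2) * ∫ t, deriv g t ^ 2 := by
  have hg' : Continuous (deriv g) := hg.continuous_deriv le_rfl
  have hsq : HasCompactSupport fun t => g t ^ 2 := by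
    simp only [sq]
    exact hgc.mul_left
  have hderiv : ∀ t, ‖deriv (fun t => g t ^ 2) t‖ = 2 * |g t * deriv g t| := fun t => by
    rw [deriv_fun_pow (hg.differentiable one_ne_zero t)]
    simp [abs_mul, mul_assoc]
  have hftc := two_mul_norm_le_integral_norm_deriv (hg.pow 2) hsq x
  simp only [hderiv, integral_const_mul, norm_pow, Real.norm_eq_abs, sq_abs] at hftc
  calc (g x ^ 2) ^ 2 ≤ (∫ t, |g t * deriv g t|) ^ 2 :=
        pow_le_pow_left₀ (sq_nonneg _) (le_of_mul_le_mul_left hftc two_pos) 2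
    _ ≤ (∫ t, g t ^ 2) * ∫ t, deriv g t ^ 2 :=
        sq_integral_abs_mul_le_integral_sq_mul_integral_sq
          (hg.continuous.memLp_of_hasCompactSupport hgc)
          (hg'.memLp_of_hasCompactSupport hgc.deriv)

end Line

section GridLine

variable {ι : Type*} [DecidableEq ι] {A : ι → Type*} [∀ i, MeasurableSpace (A i)]

/-- The integral of `F` over the line through `x` in the `i`-th coordinate direction, as a function
of the whole point `x`. It is the junk value `0` where `F` is not integrable on that line. -/
noncomputable def gridLineIntegral (μ : ∀ i, Measure (A i)) (F : (∀ i, A i) → ℝ) (i : ι)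
    (x : ∀ i, A i) : ℝ :=
  ∫ t, F (update x i t) ∂μ i

variable {μ : ∀ i, Measure (A i)} {F G : (∀ i, A i) → ℝ}

lemma gridLineIntegral_nonneg (hF0 : ∀ x, 0 ≤ F x) (i : ι) (x : ∀ i, A i) :
    0 ≤ gridLineIntegral μ F i x :=
  integral_nonneg fun t => hF0 (update x i t)

lemma gridLineIntegral_update (i : ι) (x : ∀ i, A i) (t : A i) :
    gridLineIntegral μ F i (update x i t) = gridLineIntegral μ F i x := by
  simp only [gridLineIntegral, update_idem]

lemma ofReal_gridLineIntegral_le (hF0 : ∀ x, 0 ≤ F x) (i : ι) (x : ∀ i, A i) :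
    ENNReal.ofReal (gridLineIntegral μ F i x) ≤ ∫⁻ t, ENNReal.ofReal (F (update x i t)) ∂μ i :=
  ofReal_integral_le_lintegral_ofReal fun t => hF0 (update x i t)

lemma measurable_gridLineIntegral [∀ i, SFinite (μ i)] (hF : Measurable F) (i : ι) :
    Measurable (gridLineIntegral μ F i) :=
  (StronglyMeasurable.integral_prod_right (f := fun x t => F (update x i t))
    (hF.comp measurable_update').stronglyMeasurable).measurable

variable [Fintype ι]

lemma mul_log_le_sum_gridLineIntegral {G : ι → (∀ i, A i) → ℝ} {n a p : ℝ} (hF0 : ∀ x, 0 ≤ F x)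
    (hFG : ∀ i x, F x ^ 2 ≤ gridLineIntegral μ F i x * gridLineIntegral μ (G i) i x)
    (hn : 0 < n) (ha : 0 < a) (hp : 0 < p) (x : ∀ i, A i) :
    F x * Real.log (F x) ≤
      F x * (Real.log n - Fintype.card ι / 2 * (1 + Real.log a) - 1 / p)
        + a / 2 * ∑ i, F x * (gridLineIntegral μ (G i) i x / gridLineIntegral μ F i x)
        + F x ^ (1 - (Fintype.card ι - 1) * p) * (∏ i, gridLineIntegral μ F i x ^ p) /
          (p * n ^ p) := by
  have hline (i : ι) : 0 ≤ gridLineIntegral μ F i x := gridLineIntegral_nonneg hF0 i x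
  rcases (hF0 x).eq_or_lt with hx | hx
  · have hprod := Finset.prod_nonneg fun i (_ : i ∈ Finset.univ) => Real.rpow_nonneg (hline i) p
    simp only [← hx, zero_mul, Finset.sum_const_zero, mul_zero, zero_add]
    positivity
  · exact mul_log_le_sum_div_add_rpow_mul_prod hx hn (fun i => (hline i).lt_of_ne'
      (left_ne_zero_of_mul ((pow_pos hx 2).trans_le (hFG i x)).ne')) (fun i => hFG i x) ha hp

variable [∀ i, SigmaFinite (μ i)]

lemma integrable_and_integral_mul_gridLineIntegral_div_le (hF : Measurable F) (hG : Measurable G)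
    (hF0 : ∀ x, 0 ≤ F x) (hG0 : ∀ x, 0 ≤ G x) (hGi : Integrable G (Measure.pi μ)) (i : ι) :
    Integrable (fun x => F x * (gridLineIntegral μ G i x / gridLineIntegral μ F i x))
        (Measure.pi μ) ∧
      ∫ x, F x * (gridLineIntegral μ G i x / gridLineIntegral μ F i x) ∂Measure.pi μ ≤
        ∫ x, G x ∂Measure.pi μ := by
  have hFm : Measurable (gridLineIntegral μ F i) := measurable_gridLineIntegral hF i
  have hGm : Measurable (gridLineIntegral μ G i) := measurable_gridLineIntegral hG i
  have hratio (x) : 0 ≤ gridLineIntegral μ G i x / gridLineIntegral μ F i x :=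
    div_nonneg (gridLineIntegral_nonneg hG0 i x) (gridLineIntegral_nonneg hF0 i x)
  refine integrable_and_integral_le_of_lintegral_ofReal_le (by fun_prop)
    (fun x => mul_nonneg (hF0 x) (hratio x)) (integral_nonneg hG0) ?_
  rw [ofReal_integral_eq_lintegral_ofReal hGi (ae_of_all _ hG0)]
  refine lintegral_le_of_lmarginal_le {i} (by fun_prop) (by fun_prop) fun x => ?_
  simp only [lmarginal_singleton, gridLineIntegral_update]
  simp only [ENNReal.ofReal_mul (hF0 _)]
  rw [lintegral_mul_const _ (by fun_prop)]
  by_cases hzero : gridLineIntegral μ F i x = 0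
  · simp [hzero]
  have hslice : Integrable (fun t => F (update x i t)) (μ i) := .of_integral_ne_zero hzero
  calc (∫⁻ t, ENNReal.ofReal (F (update x i t)) ∂μ i) *
        ENNReal.ofReal (gridLineIntegral μ G i x / gridLineIntegral μ F i x)
      = ENNReal.ofReal (gridLineIntegral μ G i x) := by
        rw [← ofReal_integral_eq_lintegral_ofReal hslice (ae_of_all _ fun t => hF0 _),
          ← ENNReal.ofReal_mul (integral_nonneg fun t => hF0 _)]
        exact congrArg ENNReal.ofReal (mul_div_cancel₀ _ hzero)
    _ ≤ ∫⁻ t, ENNReal.ofReal (G (update x i t)) ∂μ i := ofReal_gridLineIntegral_le hG0 i x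

lemma integrable_and_integral_rpow_mul_prod_gridLineIntegral_le {p : ℝ} (hp0 : 0 ≤ p)
    (hp : (Fintype.card ι - 1 : ℝ) * p ≤ 1) (hF : Measurable F) (hF0 : ∀ x, 0 ≤ F x)
    (hFi : Integrable F (Measure.pi μ)) :
    Integrable (fun x => F x ^ (1 - (Fintype.card ι - 1 : ℝ) * p) *
        ∏ i, gridLineIntegral μ F i x ^ p) (Measure.pi μ) ∧
      ∫ x, F x ^ (1 - (Fintype.card ι - 1 : ℝ) * p) *
          ∏ i, gridLineIntegral μ F i x ^ p ∂Measure.pi μ ≤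
        (∫ x, F x ∂Measure.pi μ) ^ (1 + p) := by
  have hline (i) (x) : 0 ≤ gridLineIntegral μ F i x ^ p :=
    Real.rpow_nonneg (gridLineIntegral_nonneg hF0 i x) p
  have hFm (i) : Measurable (gridLineIntegral μ F i) := measurable_gridLineIntegral hF i
  have hN : 0 ≤ ∫ x, F x ∂Measure.pi μ := integral_nonneg hF0
  refine integrable_and_integral_le_of_lintegral_ofReal_le
    (by fun_prop) (fun x => mul_nonneg (Real.rpow_nonneg (hF0 x) _)
      (Finset.prod_nonneg fun i _ => hline i x))
    (Real.rpow_nonneg hN _) ?_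
  rw [← ENNReal.ofReal_rpow_of_nonneg hN (by positivity),
    ofReal_integral_eq_lintegral_ofReal hFi (ae_of_all _ hF0)]
  refine le_trans (lintegral_mono fun x => ?_)
    (lintegral_mul_prod_lintegral_pow_le μ hp0 hp hF.ennreal_ofReal)
  rw [ENNReal.ofReal_mul (Real.rpow_nonneg (hF0 x) _),
    ENNReal.ofReal_prod_of_nonneg fun i _ => hline i x,
    ← ENNReal.ofReal_rpow_of_nonneg (hF0 x) (sub_nonneg.2 hp)]
  gcongr with i
  rw [← ENNReal.ofReal_rpow_of_nonneg (gridLineIntegral_nonneg hF0 i x) hp0]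
  gcongr
  exact ofReal_gridLineIntegral_le hF0 i x

lemma integral_mul_log_le_of_sq_le_gridLineIntegral_mul {G : ι → (∀ i, A i) → ℝ} {a : ℝ}
    (hF : Measurable F) (hG : ∀ i, Measurable (G i)) (hF0 : ∀ x, 0 ≤ F x) (hG0 : ∀ i x, 0 ≤ G i x)
    (hFi : Integrable F (Measure.pi μ)) (hGi : ∀ i, Integrable (G i) (Measure.pi μ))
    (hFlog : Integrable (fun x => F x * Real.log (F x)) (Measure.pi μ))
    (hFG : ∀ i x, F x ^ 2 ≤ gridLineIntegral μ F i x * gridLineIntegral μ (G i) i x) (ha : 0 < a) :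
    ∫ x, F x * Real.log (F x) ∂Measure.pi μ ≤
      (∫ x, F x ∂Measure.pi μ) * Real.log (∫ x, F x ∂Measure.pi μ)
        + a / 2 * (∑ i, ∫ x, G i x ∂Measure.pi μ)
        - Fintype.card ι / 2 * (1 + Real.log a) * ∫ x, F x ∂Measure.pi μ := by
  rcases (integral_nonneg hF0 : 0 ≤ ∫ x, F x ∂Measure.pi μ).eq_or_lt with hN | hN
  · have hae : F =ᵐ[Measure.pi μ] 0 := (integral_eq_zero_iff_of_nonneg hF0 hFi).1 hN.symm
    rw [← hN, integral_eq_zero_of_ae (hae.mono fun x (hx : F x = 0) => by simp [hx])]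
    simp only [zero_mul, zero_add, mul_zero, sub_zero]
    exact mul_nonneg (by positivity) (Finset.sum_nonneg fun i _ => integral_nonneg (hG0 i))
  set N := ∫ x, F x ∂Measure.pi μ
  obtain ⟨p, hp0, hp1⟩ : ∃ p : ℝ, 0 < p ∧ (Fintype.card ι - 1) * p ≤ 1 :=
    ⟨1 / (Fintype.card ι + 1), by positivity, by
      rw [mul_one_div, div_le_one (by positivity)]; linarith⟩
  have hquot (i : ι) :=
    integrable_and_integral_mul_gridLineIntegral_div_le hF (hG i) hF0 (hG0 i) (hGi i) i
  obtain ⟨hprod, hprod_le⟩ :=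
    integrable_and_integral_rpow_mul_prod_gridLineIntegral_le hp0.le hp1 hF hF0 hFi
  have hsum := integrable_finsetSum Finset.univ fun i _ => (hquot i).1
  have hsum_le : ∫ x, ∑ i, F x * (gridLineIntegral μ (G i) i x / gridLineIntegral μ F i x)
      ∂Measure.pi μ ≤ ∑ i, ∫ x, G i x ∂Measure.pi μ := by
    rw [integral_finsetSum _ fun i _ => (hquot i).1]
    exact Finset.sum_le_sum fun i _ => (hquot i).2
  have hNp : N ^ (1 + p) / (p * N ^ p) = N * (1 / p) := by
    rw [Real.rpow_add hN, Real.rpow_one]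
    field_simp
  have hmono := integral_mono hFlog
    (((hFi.mul_const _).add (hsum.const_mul (a / 2))).add (hprod.div_const _))
    (mul_log_le_sum_gridLineIntegral hF0 hFG hN ha hp0)
  rw [integral_add' ((hFi.mul_const _).add (hsum.const_mul _)) (hprod.div_const _),
    integral_add' (hFi.mul_const _) (hsum.const_mul _), integral_mul_const, integral_const_mul,
    integral_div] at hmono
  calc ∫ x, F x * Real.log (F x) ∂Measure.pi μ ≤ _ := hmono
    _ ≤ N * (Real.log N - Fintype.card ι / 2 * (1 + Real.log a) - 1 / p)
        + a / 2 * ∑ i, ∫ x, G i x ∂Measure.pi μ + N ^ (1 + p) / (p * N ^ p) := by gcongr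
    _ = _ := by rw [hNp]; ring

end GridLine

section LogSobolev

lemma integrable_fderiv_apply_sq {E : Type*} [NormedAddCommGroup E] [NormedSpace ℝ E]
    [MeasurableSpace E] [OpensMeasurableSpace E] {μ : Measure E} [IsFiniteMeasureOnCompacts μ]
    {f : E → ℝ} (hf : ContDiff ℝ 1 f) (hfc : HasCompactSupport f) (v : E) :
    Integrable (fun x => fderiv ℝ f x v ^ 2) μ :=
  (((hf.continuous_fderiv one_ne_zero).clm_apply continuous_const).memLp_of_hasCompactSupport
    (hfc.fderiv_apply ℝ v)).integrable_sq

lemma sq_sq_le_gridLineIntegral_mul_gridLineIntegral {ι : Type*} [Fintype ι] [DecidableEq ι]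
    {f : (ι → ℝ) → ℝ} (hf : ContDiff ℝ 1 f) (hfc : HasCompactSupport f) (i : ι) (x : ι → ℝ) :
    (f x ^ 2) ^ 2 ≤ gridLineIntegral (fun _ => volume) (fun y => f y ^ 2) i x *
      gridLineIntegral (fun _ => volume) (fun y => fderiv ℝ f y (Pi.single i 1) ^ 2) i x := by
  have hderiv (t : ℝ) : deriv (fun t => f (update x i t)) t =
      fderiv ℝ f (update x i t) (Pi.single i 1) :=
    ((hf.differentiable one_ne_zero _).hasFDerivAt.comp_hasDerivAt t
      (hasDerivAt_update x i t)).deriv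
  have h := sq_sq_le_integral_sq_mul_integral_deriv_sq (hf.comp (contDiff_update 1 x i))
    (hfc.comp_isClosedEmbedding (isClosedEmbedding_update x i)) (x i)
  simpa only [gridLineIntegral, comp_def, hderiv, update_eq_self] using h

lemma integral_sq_mul_log_sq_le_sum_integral_partial_sq {ι : Type*} [Fintype ι] [DecidableEq ι]
    {f : (ι → ℝ) → ℝ} (hf : ContDiff ℝ 1 f) (hfc : HasCompactSupport f) {a : ℝ} (ha : 0 < a) :
    ∫ x, f x ^ 2 * Real.log (f x ^ 2) ≤
      (∫ x, f x ^ 2) * Real.log (∫ x, f x ^ 2)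
        + a / 2 * (∑ i, ∫ x, fderiv ℝ f x (Pi.single i 1) ^ 2)
        - Fintype.card ι / 2 * (1 + Real.log a) * ∫ x, f x ^ 2 := by
  have hlog : Integrable fun x => f x ^ 2 * Real.log (f x ^ 2) :=
    integrable_comp_of_hasCompactSupport_s2 (φ := fun y => y ^ 2 * Real.log (y ^ 2))
      (Real.continuous_mul_log.comp (continuous_pow 2)) (by simp) hf.continuous hfc
  exact integral_mul_log_le_of_sq_le_gridLineIntegral_mul (μ := fun _ => volume)
    (hf.continuous.measurable.pow_const 2)
    (fun i => (measurable_fderiv_apply_const ℝ f _).pow_const 2)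
    (fun x => sq_nonneg (f x)) (fun i x => sq_nonneg _)
    (hf.continuous.memLp_of_hasCompactSupport hfc).integrable_sq
    (fun i => integrable_fderiv_apply_sq hf hfc _) hlog
    (sq_sq_le_gridLineIntegral_mul_gridLineIntegral hf hfc) ha

variable {E : Type*} [NormedAddCommGroup E] [InnerProductSpace ℝ E] [FiniteDimensional ℝ E]
  [MeasurableSpace E] [BorelSpace E] {w : E → ℝ}

lemma integral_sq_mul_log_sq_le_integral_norm_fderiv_sq (hw : ContDiff ℝ 1 w)
    (hwc : HasCompactSupport w) {a : ℝ} (ha : 0 < a) :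
    ∫ x, w x ^ 2 * Real.log (w x ^ 2) ≤
      (∫ x, w x ^ 2) * Real.log (∫ x, w x ^ 2) + a / 2 * (∫ x, ‖fderiv ℝ w x‖ ^ 2)
        - finrank ℝ E / 2 * (1 + Real.log a) * ∫ x, w x ^ 2 := by
  set b := stdOrthonormalBasis ℝ E
  let L : (Fin (finrank ℝ E) → ℝ) ≃L[ℝ] E :=
    (PiLp.continuousLinearEquiv 2 ℝ fun _ => ℝ).symm.trans b.repr.symm.toContinuousLinearEquiv
  have hL : MeasurePreserving L :=
    b.measurePreserving_repr_symm.comp (PiLp.volume_preserving_toLp _)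
  have hLb (i) : L (Pi.single i 1) = b i := b.repr_symm_single i
  have hint (F : E → ℝ) : ∫ y, F (L y) = ∫ x, F x :=
    hL.integral_comp L.toHomeomorph.measurableEmbedding F
  have hwL : ContDiff ℝ 1 (w ∘ L) := hw.comp L.contDiff
  have hwLc : HasCompactSupport (w ∘ L) := hwc.comp_homeomorph L.toHomeomorph
  have hgrad : ∑ i, ∫ y, fderiv ℝ (w ∘ L) y (Pi.single i 1) ^ 2 = ∫ x, ‖fderiv ℝ w x‖ ^ 2 := by
    rw [← integral_finsetSum _ fun i _ =>
      integrable_fderiv_apply_sq hwL hwLc (Pi.single i 1), ← hint]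
    simp only [L.comp_right_fderiv, ContinuousLinearMap.comp_apply, ContinuousLinearEquiv.coe_coe,
      hLb, b.norm_dual]
  have h := integral_sq_mul_log_sq_le_sum_integral_partial_sq hwL hwLc ha
  rw [hgrad, Fintype.card_fin] at h
  simpa only [comp_apply, hint fun x => w x ^ 2, hint fun x => w x ^ 2 * Real.log (w x ^ 2)] using h

lemma integral_sq_mul_log_abs_le (hw : ContDiff ℝ 1 w) (hwc : HasCompactSupport w) {ε : ℝ}
    (hε : 0 < ε) :
    ∫ x, w x ^ 2 * Real.log |w x| ≤
      ε * (∫ x, ‖fderiv ℝ w x‖ ^ 2) + finrank ℝ E / 4 * Real.log (1 / ε) * (∫ x, w x ^ 2)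
        + (∫ x, w x ^ 2) * Real.log √(∫ x, w x ^ 2) := by
  have hN : 0 ≤ ∫ x, w x ^ 2 := integral_nonneg fun x => sq_nonneg _
  have h := integral_sq_mul_log_sq_le_integral_norm_fderiv_sq hw hwc (mul_pos four_pos hε)
  have hlog (x) : w x ^ 2 * Real.log (w x ^ 2) = 2 * (w x ^ 2 * Real.log |w x|) := by
    rw [Real.log_abs, Real.log_pow]; push_cast; ring
  have hconst : 0 ≤ finrank ℝ E / 4 * (1 + Real.log 4) * ∫ x, w x ^ 2 := by
    have := Real.log_nonneg (by norm_num : (1 : ℝ) ≤ 4)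
    positivity
  simp only [hlog, integral_const_mul, Real.log_mul four_ne_zero hε.ne'] at h
  rw [Real.log_sqrt hN, one_div, Real.log_inv]
  linarith

end LogSobolev

theorem log_nonlinearity_difference_estimate_general {E : Type*} [NormedAddCommGroup E]
    [InnerProductSpace ℝ E] [FiniteDimensional ℝ E] [MeasurableSpace E] [BorelSpace E] {u v : E → ℝ}
    (hu : ContDiff ℝ 1 u) (husupp : HasCompactSupport u)
    (hv : ContDiff ℝ 1 v) (hvsupp : HasCompactSupport v)
    {ε : ℝ} (hε : 0 < ε) {α : ℝ} (hα0 : 0 ≤ α) (hα1 : α < 1) :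
    ∫ x, (u x * Real.log |u x| - v x * Real.log |v x|) * (u x - v x) ≤
      ε * (∫ x, ‖fderiv ℝ (fun y => u y - v y) x‖ ^ 2)
        + (1 + (finrank ℝ E / 4) * Real.log (1 / ε)) * (∫ x, (u x - v x) ^ 2)
        + (∫ x, (u x - v x) ^ 2) * Real.log √(∫ x, (u x - v x) ^ 2)
        + 1 / (2 * (1 - α) * Real.exp 1) *
            ((∫ x, u x ^ 2) ^ (1 - α) + (∫ x, v x ^ 2) ^ (1 - α)) *
            (∫ x, (u x - v x) ^ 2) ^ α := by
  have hw : ContDiff ℝ 1 fun x => u x - v x := hu.sub hv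
  have hwsupp : HasCompactSupport fun x => u x - v x := husupp.sub hvsupp
  have hmul_log : Continuous fun y : ℝ => y * Real.log |y| := by
    simpa only [Real.log_abs] using Real.continuous_mul_log
  have hfg : Integrable fun x => (u x * Real.log |u x| - v x * Real.log |v x|) * (u x - v x) :=
    (((hmul_log.comp hu.continuous).sub (hmul_log.comp hv.continuous)).mul
      hw.continuous).integrable_of_hasCompactSupport hwsupp.mul_left
  have hlog : Integrable fun x => (u x - v x) ^ 2 * Real.log |u x - v x| :=
    integrable_comp_of_hasCompactSupport_s2 (φ := fun y : ℝ => y ^ 2 * Real.log |y|)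
      (by simp only [sq, mul_assoc]; fun_prop) (by simp)
      hw.continuous hwsupp
  linear_combination integral_sq_mul_log_abs_le hw hwsupp hε +
    integral_mul_log_abs_sub_mul_log_abs_mul_sub_le hα0 hα1
      (hu.continuous.memLp_of_hasCompactSupport husupp)
      (hv.continuous.memLp_of_hasCompactSupport hvsupp) hfg hlog

/-- For smooth compactly supported `u, v : ℝ^d → ℝ`, `ε > 0` and `α ∈ (0,1)`:
`∫ (u log|u| − v log|v|)(u − v) ≤ ε ‖u−v‖_V² + (1 + (d/4) log(1/ε)) ‖u−v‖²
  + ‖u−v‖² log‖u−v‖ + (1/(2(1−α)e)) (‖u‖^{2(1−α)} + ‖v‖^{2(1−α)}) ‖u−v‖^{2α}`. -/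
theorem log_nonlinearity_difference_estimate
    (d : ℕ) (hd : 1 ≤ d)
    (u v : EuclideanSpace ℝ (Fin d) → ℝ)
    (hu : ContDiff ℝ (⊤ : ℕ∞) u) (husupp : HasCompactSupport u)
    (hv : ContDiff ℝ (⊤ : ℕ∞) v) (hvsupp : HasCompactSupport v)
    (ε : ℝ) (hε : 0 < ε) (α : ℝ) (hα0 : 0 < α) (hα1 : α < 1) :
    (∫ x, (u x * Real.log |u x| - v x * Real.log |v x|) * (u x - v x)) ≤
      ε * (∫ x, ‖fderiv ℝ (fun y => u y - v y) x‖ ^ 2)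
        + (1 + (d / 4 : ℝ) * Real.log (1 / ε)) * (∫ x, (u x - v x) ^ 2)
        + (∫ x, (u x - v x) ^ 2) * Real.log (Real.sqrt (∫ x, (u x - v x) ^ 2))
        + (1 / (2 * (1 - α) * Real.exp 1)) *
            ((∫ x, u x ^ 2) ^ (1 - α) + (∫ x, v x ^ 2) ^ (1 - α)) *
            (∫ x, (u x - v x) ^ 2) ^ α := by
  simpa only [finrank_euclideanSpace_fin] using log_nonlinearity_difference_estimate_general
    (hu.of_le (by exact_mod_cast le_top)) husupp (hv.of_le (by exact_mod_cast le_top)) hvsupp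
    hε hα0.le hα1
end
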